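/- arXiv:1710.10838 — 3 statements merged into one kernel-verified Lean document; each statement's English description precedes it below -/
import Mathlib

section
/- Let p be an odd prime dividing k with k ≥ 10. Then there exists a nonsplit extension 1 → M → H → A_k → 1 with M an elementary abelian p-group, such that H has a faithful permutation representation of degree p·k(k-1)/2. -/
namespace NonsplitExt

/-- The extension group: pairs `(m, g)` with `m` an alternating function on pairs whose boundary
is `e_{g z} - e_z`. -/
@[ext]
structure Ext (k p : ℕ) (z : Fin k) where
  m : Fin k → Fin k → ZMod p
  g : Equiv.Perm (Fin k)
  even : g ∈ alternatingGroup (Fin k)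
  anti : ∀ a b, m a b = - m b a
  bd : ∀ a, ∑ b, m a b = (if a = g z then 1 else 0) - (if a = z then 1 else 0)

variable {k p : ℕ} {z : Fin k}

instance : One (Ext k p z) := ⟨⟨fun _ _ => 0, 1, one_mem _, by simp, by
  intro a; by_cases h : a = z <;> simp [h]⟩⟩

instance : Mul (Ext k p z) := ⟨fun x y =>
  ⟨fun a b => x.m a b + y.m (x.g⁻¹ a) (x.g⁻¹ b), x.g * y.g, mul_mem x.even y.even, by
    intro a b
    rw [x.anti a b, y.anti (x.g⁻¹ a)]; ring, by
    intro a
    rw [Finset.sum_add_distrib, x.bd, Equiv.sum_comp x.g⁻¹ (fun b => y.m (x.g⁻¹ a) b), y.bd]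
    simp only [Equiv.Perm.mul_apply, Equiv.Perm.inv_eq_iff_eq]
    by_cases h1 : a = x.g (y.g z) <;> by_cases h2 : a = x.g z <;> by_cases h3 : a = z <;>
      simp only [h1, h2, h3, if_true, if_false] <;> ring⟩⟩

instance : Inv (Ext k p z) := ⟨fun x =>
  ⟨fun a b => - x.m (x.g a) (x.g b), x.g⁻¹, inv_mem x.even, by
    intro a b
    rw [x.anti (x.g a) (x.g b)], by
    intro a
    rw [Finset.sum_neg_distrib, Equiv.sum_comp x.g (fun b => x.m (x.g a) b), x.bd]
    simp only [Equiv.Perm.eq_inv_iff_eq, EmbeddingLike.apply_eq_iff_eq]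
    ring⟩⟩

@[simp] lemma one_m (a b) : (1 : Ext k p z).m a b = 0 := rfl
@[simp] lemma one_g : (1 : Ext k p z).g = 1 := rfl
@[simp] lemma mul_m (x y : Ext k p z) (a b) :
    (x * y).m a b = x.m a b + y.m (x.g⁻¹ a) (x.g⁻¹ b) := rfl
@[simp] lemma mul_g (x y : Ext k p z) : (x * y).g = x.g * y.g := rfl
@[simp] lemma inv_m (x : Ext k p z) (a b) : (x⁻¹).m a b = - x.m (x.g a) (x.g b) := rfl
@[simp] lemma inv_g (x : Ext k p z) : (x⁻¹).g = x.g⁻¹ := rfl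

instance : Group (Ext k p z) := Group.ofLeftAxioms
  (by intro x y w; ext <;> simp [mul_assoc, add_assoc])
  (by intro x; ext <;> simp)
  (by intro x; ext <;> simp)

/-- The projection to the alternating group. -/
def proj : Ext k p z →* alternatingGroup (Fin k) where
  toFun x := ⟨x.g, x.even⟩
  map_one' := rfl
  map_mul' _ _ := rfl

lemma proj_surj : Function.Surjective (proj : Ext k p z →* _) := by
  rintro ⟨g, hg⟩
  refine ⟨⟨fun a b => (if a = g z then 1 else 0) * (if b = z then 1 else 0)
    - (if a = z then 1 else 0) * (if b = g z then 1 else 0), g, hg, ?_, ?_⟩, rfl⟩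
  · intro a b; ring
  · intro a
    rw [Finset.sum_sub_distrib, ← Finset.mul_sum, ← Finset.mul_sum]
    simp

lemma mem_ker {x : Ext k p z} : x ∈ (proj : Ext k p z →* _).ker ↔ x.g = 1 := by
  rw [MonoidHom.mem_ker, Subtype.ext_iff]; rfl

lemma pow_g (x : Ext k p z) (n : ℕ) : (x ^ n).g = x.g ^ n := by
  induction n with
  | zero => simp
  | succ n ih => simp [pow_succ, ih]

lemma pow_m (x : Ext k p z) (n : ℕ) (a b) :
    (x ^ n).m a b = ∑ i ∈ Finset.range n, x.m ((x.g ^ i)⁻¹ a) ((x.g ^ i)⁻¹ b) := by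
  induction n with
  | zero => simp
  | succ n ih => rw [pow_succ, mul_m, ih, Finset.sum_range_succ, pow_g]

lemma ker_pow (x : Ext k p z) (hx : x ∈ (proj : Ext k p z →* _).ker) : x ^ p = 1 := by
  rw [mem_ker] at hx
  ext a b
  · rw [pow_m]; simp [hx]
  · rw [pow_g]; simp [hx]

lemma ker_comm (x y : Ext k p z) (hx : x ∈ (proj : Ext k p z →* _).ker)
    (hy : y ∈ (proj : Ext k p z →* _).ker) : x * y = y * x := by
  rw [mem_ker] at hx hy
  ext a b
  · simp [hx, hy, add_comm]
  · simp [hx, hy]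

lemma sum_range_zmod [NeZero p] (F : ZMod p → ZMod p) :
    ∑ i ∈ Finset.range p, F (-(i : ZMod p)) = ∑ y, F y := by
  rw [← Equiv.sum_comp (Equiv.neg (ZMod p)) F]
  refine Finset.sum_bij' (fun i _ => (i : ZMod p)) (fun y _ => y.val) ?_ ?_ ?_ ?_ ?_
  · simp
  · intro y _; simpa using ZMod.val_lt y
  · intro i hi; exact ZMod.val_cast_of_lt (by simpa using hi)
  · intro y _; simp
  · intro i _; rfl

/-- The rotation by one in the second coordinate. -/
def rot (q p : ℕ) : Equiv.Perm (Fin q × ZMod p) :=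
  Equiv.prodCongr (Equiv.refl _) (Equiv.addRight 1)

lemma rot_pow (q p i : ℕ) (r : Fin q) (x : ZMod p) : (rot q p ^ i) (r, x) = (r, x + i) := by
  induction i with
  | zero => simp
  | succ n ih => rw [pow_succ', Equiv.Perm.mul_apply, ih]; simp [rot, add_assoc]

lemma key [NeZero p] (hodd : Odd p) (hp : p.Prime) {q : ℕ} (e : Fin k ≃ Fin q × ZMod p)
    (x : Ext k p z) (hg : x.g = e.symm.permCongr (rot q p)) (hx : x ^ p = 1) : False := by
  have hpow : ∀ (i : ℕ) r d, (x.g ^ i)⁻¹ (e.symm (r, d)) = e.symm (r, d - i) := by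
    intro i r d
    rw [Equiv.Perm.inv_eq_iff_eq]
    have h : x.g ^ i = e.symm.permCongr (rot q p ^ i) := by
      rw [hg]; exact (map_pow e.symm.permCongrHom (rot q p) i).symm
    rw [h]; simp [Equiv.permCongr_apply, rot_pow]
  have hN : ∀ r s d, ∑ y, x.m (e.symm (r, y + d)) (e.symm (s, y)) = 0 := by
    intro r s d
    have h := pow_m x p (e.symm (r, d)) (e.symm (s, 0))
    rw [hx, one_m] at h
    rw [← sum_range_zmod, h]
    refine Finset.sum_congr rfl fun i _ => ?_
    rw [hpow, hpow]
    congr 3 <;> ring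
  set f : Fin k → ZMod p := fun a => (e a).2 with hf
  have hS : ∑ a, ∑ b, f a * x.m a b = 1 := by
    simp_rw [← Finset.mul_sum, x.bd, mul_sub, Finset.sum_sub_distrib]
    simp [hf, hg, Equiv.permCongr_apply, rot]
  have hS' : ∑ a, ∑ b, f b * x.m a b = -1 := by
    rw [Finset.sum_comm, ← hS, ← Finset.sum_neg_distrib]
    refine Finset.sum_congr rfl fun a _ => ?_
    rw [← Finset.sum_neg_distrib]
    refine Finset.sum_congr rfl fun b _ => ?_
    rw [x.anti]; ring
  have hT : ∑ a, ∑ b, (f a - f b) * x.m a b = 2 := by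
    simp_rw [sub_mul, Finset.sum_sub_distrib, hS, hS']; ring
  have hT0 : ∑ a, ∑ b, (f a - f b) * x.m a b = 0 := by
    rw [← Equiv.sum_comp e.symm]
    simp_rw [← Equiv.sum_comp e.symm (fun b => (f _ - f b) * x.m _ b)]
    simp only [Fintype.sum_prod_type, hf, Equiv.apply_symm_apply]
    refine Finset.sum_eq_zero fun r _ => ?_
    rw [Finset.sum_comm]
    refine Finset.sum_eq_zero fun s _ => ?_
    rw [Finset.sum_comm]
    have : ∀ y : ZMod p, ∑ w, (w - y) * x.m (e.symm (r, w)) (e.symm (s, y))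
        = ∑ d, d * x.m (e.symm (r, y + d)) (e.symm (s, y)) := by
      intro y
      rw [← Equiv.sum_comp (Equiv.addLeft y)]
      simp
    simp_rw [this]
    rw [Finset.sum_comm]
    refine Finset.sum_eq_zero fun d _ => ?_
    rw [← Finset.mul_sum, hN, mul_zero]
  rw [hT0] at hT
  have h2 : ((2 : ℕ) : ZMod p) = 0 := by exact_mod_cast hT.symm
  rw [ZMod.natCast_eq_zero_iff] at h2
  have := (Nat.prime_dvd_prime_iff_eq hp Nat.prime_two).1 h2
  subst this
  exact absurd hodd (by decide)

lemma nonsplit [NeZero p] (hodd : Odd p) (hp : p.Prime) (hdvd : p ∣ k) :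
    ¬ ∃ K : Subgroup (Ext k p z), (proj : Ext k p z →* _).ker.IsComplement' K := by
  rintro ⟨K, hK⟩
  obtain ⟨q, hq⟩ := hdvd
  have e : Fin k ≃ Fin q × ZMod p := Fintype.equivOfCardEq (by simp [ZMod.card, hq, mul_comm])
  set c := e.symm.permCongr (rot q p) with hc
  have hcp : c ^ p = 1 := by
    have h : c ^ p = e.symm.permCongr (rot q p ^ p) :=
      (map_pow e.symm.permCongrHom (rot q p) p).symm
    have h1 : rot q p ^ p = 1 := by
      ext1 ⟨r, y⟩
      rw [rot_pow]; simp
    rw [h, h1]; ext; simp [Equiv.permCongr_apply]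
  have hca : c ∈ alternatingGroup (Fin k) := by
    rw [Equiv.Perm.mem_alternatingGroup]
    have h : Equiv.Perm.sign c ^ p = 1 := by rw [← map_pow, hcp, map_one]
    rcases Int.units_eq_one_or (Equiv.Perm.sign c) with h1 | h1
    · exact h1
    · rw [h1, hodd.neg_one_pow] at h; exact absurd h (by decide)
  obtain ⟨y, hy⟩ := proj_surj (p := p) (z := z) ⟨c, hca⟩
  obtain ⟨⟨n, h⟩, hnh⟩ := hK.2 y
  have hyg : y.g = c := congrArg Subtype.val hy
  have hng := mem_ker.1 n.2
  have hhg : (h : Ext k p z).g = c := by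
    rw [← hyg, ← hnh]; simp [hng]
  refine key hodd hp e (h : Ext k p z) hhg ?_
  have h1 : (h : Ext k p z) ^ p ∈ (proj : Ext k p z →* _).ker := by
    rw [mem_ker, pow_g, hhg, hcp]
  have := hK.disjoint.le_bot (Subgroup.mem_inf.2 ⟨h1, pow_mem h.2 p⟩)
  simpa using this

/-- The set acted upon. -/
abbrev Pts (k p : ℕ) := {q : Fin k × Fin k // q.1 < q.2} × ZMod p

/-- Normal form of a triple `(i, j, t)` modulo `(i, j, t) ~ (j, i, -t)`. -/
def nf (i j : Fin k) (t : ZMod p) (h : i ≠ j) : Pts k p :=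
  if h' : i < j then (⟨(i, j), h'⟩, t)
  else (⟨(j, i), lt_of_le_of_ne (not_lt.1 h') h.symm⟩, -t)

instance : MulAction (Ext k p z) (Pts k p) where
  smul x u := nf (x.g u.1.1.1) (x.g u.1.1.2) (u.2 + x.m (x.g u.1.1.1) (x.g u.1.1.2))
    (fun h => u.1.2.ne (x.g.injective h))
  one_smul u := by
    obtain ⟨⟨⟨i, j⟩, h⟩, t⟩ := u
    change nf _ _ _ _ = _
    have h' : i < j := h
    simp [nf, h']
  mul_smul x y u := by
    obtain ⟨⟨⟨i, j⟩, h⟩, t⟩ := u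
    change nf _ _ _ _ = nf _ _ _ _
    have h' : i < j := h
    have hx : x.g (y.g i) ≠ x.g (y.g j) := fun h => h'.ne (by simpa using h)
    have hy : y.g i ≠ y.g j := fun h => h'.ne (by simpa using h)
    change _ = nf (x.g (nf _ _ _ _).1.1.1) (x.g (nf _ _ _ _).1.1.2)
      ((nf _ _ _ _).2 + x.m (x.g (nf _ _ _ _).1.1.1) (x.g (nf _ _ _ _).1.1.2)) _
    have := x.anti (x.g (y.g i)) (x.g (y.g j))
    rcases lt_or_gt_of_ne hx with h1 | h1 <;> rcases lt_or_gt_of_ne hy with h2 | h2 <;>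
      simp [nf, h1, h2, h1.not_gt, h2.not_gt, this] <;> ring

lemma smul_def (x : Ext k p z) (i j : Fin k) (h : i < j) (t : ZMod p) :
    x • ((⟨(i, j), h⟩, t) : Pts k p) = nf (x.g i) (x.g j) (t + x.m (x.g i) (x.g j))
      (fun h' => h.ne (x.g.injective h')) := rfl

lemma faithful (hodd : Odd p) (hp : p.Prime) (hk : 10 ≤ k) :
    Function.Injective (MulAction.toPermHom (Ext k p z) (Pts k p)) := by
  have := Fact.mk hp
  have : Fact (2 < p) := ⟨by
    rcases hp.two_le.lt_or_eq with h | h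
    · exact h
    · subst h; exact absurd hodd (by decide)⟩
  have hself : ∀ t : ZMod p, t = -t → t = 0 := fun t ht => by
    have h2 : (2 : ZMod p) ≠ 0 := Ring.two_ne_zero (by rw [ZMod.ringChar_zmod_n]; have := Fact.out (p := 2 < p); omega)
    have : 2 * t = 0 := by linear_combination ht
    exact (mul_eq_zero.1 this).resolve_left h2
  rw [injective_iff_map_eq_one]
  intro x hx
  have hact : ∀ u : Pts k p, x • u = u := fun u => by
    have := congrArg (fun σ : Equiv.Perm (Pts k p) => σ u) hx
    simpa using this
  have hpair : ∀ i j, i < j → (x.g i = i ∧ x.g j = j ∧ x.m i j = 0) ∨ (x.g i = j ∧ x.g j = i) := by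
    intro i j h
    have h0 := hact (⟨(i, j), h⟩, 0)
    rw [smul_def] at h0
    unfold nf at h0
    split_ifs at h0 with h1
    · left
      simp only [Prod.mk.injEq, Subtype.mk.injEq] at h0
      obtain ⟨⟨ha, hb⟩, hc⟩ := h0
      rw [ha, hb] at hc
      exact ⟨ha, hb, by simpa using hc⟩
    · right
      simp only [Prod.mk.injEq, Subtype.mk.injEq] at h0
      exact ⟨h0.1.2, h0.1.1⟩
  have hg2 : ∀ i j, i ≠ j → x.g i = i ∨ x.g i = j := by
    intro i j h
    rcases lt_or_gt_of_ne h with h | h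
    · rcases hpair _ _ h with h | h <;> simp [h.1]
    · rcases hpair _ _ h with h | h
      · exact Or.inl h.2.1
      · exact Or.inr h.2
  have hg : x.g = 1 := by
    ext1 i
    by_contra hne
    have hne' : x.g i ≠ i := hne
    obtain ⟨j, hj⟩ : ∃ j : Fin k, j ∉ ({i, x.g i} : Finset (Fin k)) := by
      by_contra! hall
      have h1 : (Finset.univ : Finset (Fin k)) ⊆ {i, x.g i} := fun j _ => hall j
      have h2 := (Finset.card_le_card h1).trans Finset.card_le_two
      simp at h2; omega
    simp only [Finset.mem_insert, Finset.mem_singleton, not_or] at hj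
    rcases hg2 i j (Ne.symm hj.1) with h | h
    · exact hne' h
    · exact hj.2 h.symm
  have hlt : ∀ i j, i < j → x.m i j = 0 := by
    intro i j h
    rcases hpair i j h with h' | h'
    · exact h'.2.2
    · rw [hg] at h'; exact absurd h'.1 h.ne
  ext a b
  · rw [one_m]
    rcases lt_trichotomy a b with h | h | h
    · exact hlt _ _ h
    · subst h; exact hself _ (x.anti a a)
    · rw [x.anti, hlt _ _ h, neg_zero]
  · simp [hg]

lemma card_pts [NeZero p] : Fintype.card (Pts k p) = p * (k * (k - 1)) / 2 := by
  have h1 : Fintype.card {q : Fin k × Fin k // q.1 < q.2} = k * (k - 1) / 2 := by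
    let E : {q : Fin k × Fin k // q.1 < q.2} ≃ Σ j : Fin k, Fin (j : ℕ) :=
      { toFun := fun q => ⟨q.1.2, ⟨q.1.1, q.2⟩⟩
        invFun := fun s => ⟨(⟨s.2, s.2.2.trans s.1.2⟩, s.1), s.2.2⟩
        left_inv := fun q => rfl
        right_inv := fun s => rfl }
    rw [Fintype.card_congr E, Fintype.card_sigma]
    simp only [Fintype.card_fin]
    rw [Fin.sum_univ_eq_sum_range (fun i => i) k, Finset.sum_range_id]
  rw [Fintype.card_prod, h1, ZMod.card, mul_comm,
    Nat.mul_div_assoc _ (even_iff_two_dvd.1 (Nat.even_mul_pred_self k))]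

end NonsplitExt

/-- **Theorem (Guralnick–Liebeck, Theorem 1.2(i)).**
Let `p` be an odd prime dividing `k`, with `k ≥ 10`. Then there is a nonsplit extension
`1 → M → H → A_k → 1` with `M` a nontrivial elementary abelian `p`-group, such that `H`
has a faithful permutation representation of degree `p·k(k-1)/2`; equivalently, `H` can be
realized as a subgroup of the symmetric group of degree `p·k(k-1)/2`. -/
theorem exists_nonsplit_extension_perm_rep_odd
    (k p : ℕ) (hk : 10 ≤ k) (hp : p.Prime) (hodd : Odd p) (hdvd : p ∣ k) :
    ∃ H : Subgroup (Equiv.Perm (Fin (p * (k * (k - 1)) / 2))),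
      ∃ M : Subgroup H, M.Normal ∧ M ≠ ⊥ ∧
        (∀ x ∈ M, x ^ p = 1) ∧ (∀ x ∈ M, ∀ y ∈ M, x * y = y * x) ∧
        (∃ _ : M.Normal, Nonempty ((H ⧸ M) ≃* alternatingGroup (Fin k))) ∧
        ¬ ∃ K : Subgroup H, M.IsComplement' K := by
  have : NeZero p := ⟨hp.ne_zero⟩
  let z : Fin k := ⟨0, by omega⟩
  let E : NonsplitExt.Pts k p ≃ Fin (p * (k * (k - 1)) / 2) :=
    Fintype.equivFinOfCardEq NonsplitExt.card_pts
  let φ : NonsplitExt.Ext k p z →* Equiv.Perm (Fin (p * (k * (k - 1)) / 2)) :=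
    E.permCongrHom.toMonoidHom.comp (MulAction.toPermHom _ (NonsplitExt.Pts k p))
  have hφ : Function.Injective φ :=
    E.permCongrHom.injective.comp (NonsplitExt.faithful hodd hp hk)
  let e : NonsplitExt.Ext k p z ≃* φ.range := MonoidHom.ofInjective hφ
  let π : φ.range →* alternatingGroup (Fin k) := NonsplitExt.proj.comp e.symm.toMonoidHom
  have hπ : Function.Surjective π := NonsplitExt.proj_surj.comp e.symm.surjective
  have hker : ∀ x, x ∈ π.ker ↔ e.symm x ∈ (NonsplitExt.proj (k := k) (p := p) (z := z)).ker :=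
    fun x => Iff.rfl
  have hns : ¬ ∃ K : Subgroup φ.range, π.ker.IsComplement' K := by
    rintro ⟨K, hK⟩
    refine NonsplitExt.nonsplit (z := z) hodd hp hdvd ⟨K.comap e.toMonoidHom, ?_⟩
    refine Subgroup.isComplement'_of_disjoint_and_mul_eq_univ ?_ ?_
    · rw [Subgroup.disjoint_def]
      intro x hx hxK
      have h1 : e x ∈ π.ker := by rw [hker]; simpa using hx
      have := Subgroup.disjoint_def.1 hK.disjoint h1 hxK
      simpa using this
    · rw [Set.eq_univ_iff_forall]
      intro x
      obtain ⟨⟨n, h⟩, hnh⟩ := hK.2 (e x)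
      refine Set.mem_mul.2 ⟨e.symm n, (hker _).1 n.2, e.symm h, ?_, ?_⟩
      · change e (e.symm h) ∈ K
        simp
      · apply e.injective
        simpa using hnh
  refine ⟨φ.range, π.ker, inferInstance, ?_, ?_, ?_, ⟨inferInstance,
    ⟨QuotientGroup.quotientKerEquivOfSurjective π hπ⟩⟩, hns⟩
  · intro h
    exact hns ⟨⊤, by rw [h]; exact Subgroup.isComplement'_bot_top⟩
  · intro x hx
    apply e.symm.injective
    rw [map_pow, map_one]
    exact NonsplitExt.ker_pow _ ((hker x).1 hx)
  · intro x hx y hy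
    apply e.symm.injective
    rw [map_mul, map_mul]
    exact NonsplitExt.ker_comm _ _ ((hker x).1 hx) ((hker y).1 hy)
end

section
/- With k ≥ 10, G = A_k, Y the stabilizer of {1,2}, and P = 𝔽₂↑_Y^G the permutation module on 2-subsets, one has dim H²(G, P) = 2 over 𝔽₂. -/
open Pointwise

/-- Permutation representation of `G` on `X → F` from an action of `G` on `X`. -/
def permRep (F G X : Type*) [CommRing F] [Group G] [MulAction G X] :
    Representation F G (X → F) where
  toFun g := LinearMap.funLeft F F (fun x => g⁻¹ • x)
  map_one' := by ext v x; simp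
  map_mul' g h := by ext v x; simp [LinearMap.funLeft, mul_smul]

/-- The set of 2-element subsets of `{1,…,k}`. -/
def Xk (k : ℕ) := {s : Finset (Fin k) // s.card = 2}

instance (k : ℕ) : Fintype (Xk k) := Subtype.fintype _
instance (k : ℕ) : DecidableEq (Xk k) := Subtype.instDecidableEq

instance (k : ℕ) : MulAction (Equiv.Perm (Fin k)) (Xk k) where
  smul g s := ⟨g • s.1, by rw [Finset.card_smul_finset]; exact s.2⟩
  one_smul s := Subtype.ext (one_smul _ s.1)
  mul_smul g h s := Subtype.ext (mul_smul g h s.1)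


namespace H2Sym

/-- Trivial-coefficient 2-cocycle condition with values in `ZMod 2`. -/
def IsCoc {G : Type*} [Group G] (f : G → G → ZMod 2) : Prop :=
  ∀ g h j : G, f (g * h) j + f g h = f h j + f g (h * j)

/-- Central extension of `G` by `ZMod 2` attached to a function `f`. -/
@[ext] structure Ext {G : Type*} (f : G → G → ZMod 2) where
  c : ZMod 2
  p : G

section
variable {G : Type*} [Group G] (f : G → G → ZMod 2)

theorem coc_one_left {f : G → G → ZMod 2} (hf : IsCoc f) (h1 : f 1 1 = 0) (g : G) :
    f 1 g = 0 := by
  have := hf 1 1 g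
  simp only [mul_one, one_mul, h1] at this
  simpa using this.symm

theorem coc_one_right {f : G → G → ZMod 2} (hf : IsCoc f) (h1 : f 1 1 = 0) (g : G) :
    f g 1 = 0 := by
  have := hf g 1 1
  simpa [mul_one, one_mul, h1] using this

/-- The group structure on the extension. -/
@[reducible] def extGroup (hf : IsCoc f) (h1 : f 1 1 = 0) : Group (Ext f) where
  mul x y := ⟨x.c + y.c + f x.p y.p, x.p * y.p⟩
  one := ⟨0, 1⟩
  inv x := ⟨-x.c - f x.p⁻¹ x.p, x.p⁻¹⟩
  mul_assoc x y z := by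
    apply Ext.ext
    · change x.c + y.c + f x.p y.p + z.c + f (x.p * y.p) z.p
        = x.c + (y.c + z.c + f y.p z.p) + f x.p (y.p * z.p)
      linear_combination hf x.p y.p z.p
    · exact mul_assoc _ _ _
  one_mul x := by
    apply Ext.ext
    · change 0 + x.c + f 1 x.p = x.c
      rw [coc_one_left hf h1]; ring
    · exact one_mul _
  mul_one x := by
    apply Ext.ext
    · change x.c + 0 + f x.p 1 = x.c
      rw [coc_one_right hf h1]; ring
    · exact mul_one _
  inv_mul_cancel x := by
    apply Ext.ext
    · change -x.c - f x.p⁻¹ x.p + x.c + f x.p⁻¹ x.p = 0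
      ring
    · exact inv_mul_cancel _

end

open Equiv

section general
variable {α : Type*} [DecidableEq α] {E : Type*} [Group E] (π : E →* Perm α)

/-- Subgroup generated by those elements of `C` lying over transpositions of points of `s`. -/
def Hs (C : Set E) (s : Finset α) : Subgroup E :=
  Subgroup.closure {e | e ∈ C ∧ ∃ i ∈ s, ∃ j ∈ s, i ≠ j ∧ π e = swap i j}

theorem Hs_fix {C : Set E} {s : Finset α} {n : α} (hn : n ∉ s) {e : E} (he : e ∈ Hs π C s) :
    π e n = n := by
  induction he using Subgroup.closure_induction with
  | mem x hx =>
    obtain ⟨-, i, hi, j, hj, hij, h⟩ := hx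
    rw [h, swap_apply_of_ne_of_ne] <;> rintro rfl <;> contradiction
  | one => simp
  | mul x y _ _ hx hy => simp [hx, hy]
  | inv x _ hx => rw [map_inv, Perm.inv_eq_iff_eq, hx]

theorem Hs_ker (C : Set E) (hconj : ∀ e x : E, x ∈ C → e * x * e⁻¹ ∈ C)
    (hsq : ∀ x ∈ C, x * x = 1)
    (huniq : ∀ x ∈ C, ∀ y ∈ C, π x = π y → x = y)
    (s : Finset α) :
    ∀ e ∈ Hs π C s, π e = 1 → e = 1 := by
  induction s using Finset.induction_on with
  | empty =>
    intro e he _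
    simpa [Hs] using he
  | insert n s hn ih =>
    have step1 : ∀ y ∈ C, ∀ a ∈ s, π y = swap a n → ∀ z, (z ∈ Hs π C s ∨
        ∃ c ∈ s, ∃ x ∈ C, π x = swap c n ∧ ∃ h ∈ Hs π C s, z = x * h) →
        (y * z ∈ Hs π C s ∨
        ∃ c ∈ s, ∃ x ∈ C, π x = swap c n ∧ ∃ h ∈ Hs π C s, y * z = x * h) := by
      intro y hyC a ha hy z hz
      rcases hz with hz | ⟨c, hc, x, hx, hxs, h, hh, rfl⟩
      · exact Or.inr ⟨a, ha, y, hyC, hy, z, hz, rfl⟩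
      · by_cases hac : a = c
        · subst hac
          have hxy : y = x := huniq y hyC x hx (hy.trans hxs.symm)
          subst hxy
          left
          rw [← mul_assoc, hsq y hx, one_mul]
          exact hh
        · right
          refine ⟨c, hc, x, hx, hxs, (x⁻¹ * y * x) * h, mul_mem (Subgroup.subset_closure ?_) hh,
            by group⟩
          refine ⟨by simpa using hconj x⁻¹ y hyC, a, ha, c, hc, hac, ?_⟩
          have han : a ≠ n := by rintro rfl; contradiction
          have hcn : c ≠ n := by rintro rfl; contradiction
          have h3 : swap c n * swap a n * (swap c n)⁻¹ = swap (swap c n a) (swap c n n) := by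
            rw [swap_apply_apply]
          rw [swap_apply_right, swap_apply_of_ne_of_ne hac han, swap_inv] at h3
          rw [map_mul, map_mul, map_inv, hxs, hy, swap_inv, h3]
    have step : ∀ y, (y ∈ C ∧ ∃ i ∈ insert n s, ∃ j ∈ insert n s, i ≠ j ∧ π y = swap i j) →
        ∀ z, (z ∈ Hs π C s ∨
        ∃ c ∈ s, ∃ x ∈ C, π x = swap c n ∧ ∃ h ∈ Hs π C s, z = x * h) →
        (y * z ∈ Hs π C s ∨
        ∃ c ∈ s, ∃ x ∈ C, π x = swap c n ∧ ∃ h ∈ Hs π C s, y * z = x * h) := by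
      rintro y ⟨hyC, i, hi, j, hj, hij, hy⟩ z hz
      rcases Finset.mem_insert.1 hi with rfl | hi'
      · have hj' : j ∈ s := (Finset.mem_insert.1 hj).resolve_left (Ne.symm hij)
        exact step1 y hyC j hj' (by rw [hy, swap_comm]) z hz
      rcases Finset.mem_insert.1 hj with rfl | hj'
      · exact step1 y hyC i hi' hy z hz
      have hyH : y ∈ Hs π C s := Subgroup.subset_closure ⟨hyC, i, hi', j, hj', hij, hy⟩
      rcases hz with hz | ⟨c, hc, x, hx, hxs, h, hh, rfl⟩
      · exact Or.inl (mul_mem hyH hz)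
      · right
        refine ⟨swap i j c, ?_, y * x * y⁻¹, hconj y x hx, ?_, y * h, mul_mem hyH hh, by group⟩
        · rw [swap_apply_def]; split_ifs <;> assumption
        · have hin : n ≠ i := by rintro rfl; contradiction
          have hjn : n ≠ j := by rintro rfl; contradiction
          have h3 := swap_apply_apply (swap i j) c n
          rw [swap_apply_of_ne_of_ne hin hjn] at h3
          rw [map_mul, map_mul, map_inv, hxs, hy, h3]
    have key : ∀ e ∈ Hs π C (insert n s), e ∈ Hs π C s ∨
        ∃ c ∈ s, ∃ x ∈ C, π x = swap c n ∧ ∃ h ∈ Hs π C s, e = x * h := by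
      intro e he
      induction he using Subgroup.closure_induction_left with
      | one => exact Or.inl (one_mem _)
      | mul_left y hy z hz ihz => exact step y hy z ihz
      | inv_mul_cancel y hy z hz ihz =>
        rw [inv_eq_of_mul_eq_one_left (hsq y hy.1)]
        exact step y hy z ihz
    intro e he h1
    rcases key e he with h | ⟨c, hc, x, hx, hxs, h, hh, rfl⟩
    · exact ih e h h1
    · exfalso
      have := congrArg (fun g => g n) h1
      simp only [map_mul, Perm.mul_apply, Hs_fix π hn hh, hxs, swap_apply_right,
        Perm.one_apply] at this
      subst this; contradiction

/-- A conjugation-stable family of involutive lifts of transpositions splits the extension. -/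
theorem exists_section [Fintype α] (C : Set E) (hconj : ∀ e x : E, x ∈ C → e * x * e⁻¹ ∈ C)
    (hsq : ∀ x ∈ C, x * x = 1)
    (huniq : ∀ x ∈ C, ∀ y ∈ C, π x = π y → x = y)
    (hex : ∀ i j : α, i ≠ j → ∃ x ∈ C, π x = swap i j) :
    ∃ s : Perm α →* E, ∀ g, π (s g) = g := by
  let H := Hs π C Finset.univ
  let φ : H →* Perm α := π.comp H.subtype
  have hinj : Function.Injective φ := by
    rw [injective_iff_map_eq_one]
    rintro ⟨e, he⟩ h
    exact Subtype.ext (Hs_ker π C hconj hsq huniq Finset.univ e he h)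
  have hsurj : Function.Surjective φ := by
    rw [← MonoidHom.range_eq_top, eq_top_iff, ← Perm.closure_isSwap, Subgroup.closure_le]
    rintro g ⟨i, j, hij, rfl⟩
    obtain ⟨x, hx, hxs⟩ := hex i j hij
    exact ⟨⟨x, Subgroup.subset_closure ⟨hx, i, Finset.mem_univ _, j, Finset.mem_univ _, hij, hxs⟩⟩,
      hxs⟩
  let e := MulEquiv.ofBijective φ ⟨hinj, hsurj⟩
  exact ⟨H.subtype.comp e.symm.toMonoidHom, fun g => e.apply_symm_apply g⟩

/-- Main splitting criterion. `z` is the central element generating the kernel. -/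
theorem exists_section_of_comm [Fintype α] (hπ : Function.Surjective π) (z : E)
    (hz : ∀ e, e * z = z * e)
    (hker : ∀ e, π e = 1 → e = 1 ∨ e = z) (a b c d : α) (hab : a ≠ b) (hac : a ≠ c)
    (had : a ≠ d) (hbc : b ≠ c) (hbd : b ≠ d) (hcd : c ≠ d) (t u : E) (ht : π t = swap a b)
    (hu : π u = swap c d) (htt : t * t = 1) (htu : t * u = u * t) :
    ∃ s : Perm α →* E, ∀ g, π (s g) = g := by
  have hfib : ∀ x y, π x = π y → x = y ∨ x = z * y := by
    intro x y h
    rcases hker (x * y⁻¹) (by simp [h]) with h | h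
    · left; exact mul_inv_eq_one.1 h
    · right; exact mul_inv_eq_iff_eq_mul.1 h
  have htrans : ∀ i j k l : α, i ≠ j → i ≠ k → i ≠ l → j ≠ k → j ≠ l → k ≠ l →
      ∃ g : Perm α, g a = i ∧ g b = j ∧ g c = k ∧ g d = l := by
    intro i j k l hij hik hil hjk hjl hkl
    obtain ⟨g, hg⟩ := Perm.exists_extending_pair ![a, b, c, d] ![i, j, k, l]
      (by intro x y; fin_cases x <;> fin_cases y <;> simp [*, Ne.symm, eq_comm])
      (by intro x y; fin_cases x <;> fin_cases y <;> simp [*, Ne.symm, eq_comm])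
    exact ⟨g, hg 0, hg 1, hg 2, hg 3⟩
  have hcomm : ∀ i j, a ≠ i → a ≠ j → b ≠ i → b ≠ j → i ≠ j → ∀ v, π v = swap i j →
      t * v = v * t := by
    intro i j hai haj hbi hbj hij v hv
    obtain ⟨g, h1, h2, h3, h4⟩ := htrans a b i j hab hai haj hbi hbj hij
    obtain ⟨e, he⟩ := hπ g
    have e1 : π t = π (e * t * e⁻¹) := by
      simp only [map_mul, map_inv, he, ht]
      rw [← swap_apply_apply, h1, h2]
    have e2 : π v = π (e * u * e⁻¹) := by
      simp only [map_mul, map_inv, he, hu, hv]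
      rw [← swap_apply_apply, h3, h4]
    have hZ : ∀ x, Commute x z := fun x => hz x
    have hC : Commute (e * t * e⁻¹) (e * u * e⁻¹) := by
      have : Commute t u := htu
      simpa using this.map (MulAut.conj e).toMonoidHom
    change Commute t v
    rcases hfib _ _ e1 with h | h <;> rcases hfib _ _ e2 with h' | h' <;> rw [h, h']
    · exact hC
    · exact (hZ _).mul_right hC
    · exact (hZ _).symm.mul_left hC
    · exact ((hZ _).mul_right ((hZ _).symm.mul_left hC))
  have hfix : ∀ g : Perm α, g a = a → g b = b → ∀ e, π e = g → t * e = e * t := by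
    intro g hga hgb
    have h1 : ∀ x, (g x ≠ a ∧ g x ≠ b) ↔ (x ≠ a ∧ x ≠ b) := by
      intro x
      have e1 : g x = a ↔ x = a := by
        constructor
        · intro h; exact g.injective (h.trans hga.symm)
        · rintro rfl; exact hga
      have e2 : g x = b ↔ x = b := by
        constructor
        · intro h; exact g.injective (h.trans hgb.symm)
        · rintro rfl; exact hgb
      rw [Ne, Ne, Ne, Ne, e1, e2]
    have h2 : ∀ x, g x ≠ x → (x ≠ a ∧ x ≠ b) := by
      rintro x hx
      constructor <;> rintro rfl <;> contradiction
    rw [← Perm.ofSubtype_subtypePerm (p := fun x => x ≠ a ∧ x ≠ b) h1 h2]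
    generalize g.subtypePerm (p := fun x => x ≠ a ∧ x ≠ b) h1 = g'
    induction g' using Perm.swap_induction_on with
    | one =>
      intro e he
      rcases hker e (by simpa using he) with rfl | rfl
      · simp
      · exact hz t
    | swap_mul f x y hxy ih =>
      intro e he
      obtain ⟨v, hv⟩ := hπ (swap x.1 y.1)
      have c1 : Commute t v := hcomm x y x.2.1.symm y.2.1.symm x.2.2.symm y.2.2.symm
        (fun h => hxy (Subtype.ext h)) v hv
      have c2 : Commute t (v⁻¹ * e) := by
        refine ih _ ?_
        rw [map_mul, map_inv, hv, he, map_mul, Perm.ofSubtype_swap_eq]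
        simp
      have c3 : Commute t e := by simpa using c1.mul_right c2
      exact c3
  have hcent : ∀ e, π e * swap a b = swap a b * π e → t * e = e * t := by
    intro e he
    have h1 : π e b = swap a b (π e a) := by
      have := congrArg (fun w => w a) he
      simpa using this
    have h2 : π e a = a ∨ π e a = b := by
      by_contra! h
      rw [swap_apply_of_ne_of_ne h.1 h.2] at h1
      exact hab ((π e).injective h1.symm)
    rcases h2 with h2 | h2
    · exact hfix (π e) h2 (by rw [h1, h2, swap_apply_left]) e rfl
    · have := hfix (π (t * e)) (by simp [ht, h2]) (by simp [ht, h1, h2]) _ rfl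
      have c1 : Commute t (t * e) := this
      have c2 : Commute t t⁻¹ := (Commute.refl t).inv_right
      have c3 : Commute t e := by simpa using c2.mul_right c1
      exact c3
  refine exists_section π {x | IsConj t x} ?_ ?_ ?_ ?_
  · intro e x hx
    exact IsConj.trans hx (isConj_iff.2 ⟨e, rfl⟩)
  · intro x hx
    obtain ⟨e, rfl⟩ := isConj_iff.1 hx
    simp [mul_assoc]
    simp [← mul_assoc, htt]
  · intro x hx y hy hxy
    obtain ⟨e, rfl⟩ := isConj_iff.1 hx
    obtain ⟨e', rfl⟩ := isConj_iff.1 hy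
    have := hcent (e'⁻¹ * e) (by
      simp only [map_mul, map_inv, ht] at hxy ⊢
      have h2 := congrArg (fun w => (π e')⁻¹ * w * π e) hxy
      simpa [mul_assoc] using h2)
    have h2 := congrArg (fun w => e' * w * e⁻¹) this
    simpa [mul_assoc] using h2.symm
  · intro i j hij
    obtain ⟨g, hg⟩ := Perm.exists_extending_pair ![a, b] ![i, j]
      (by intro x y; fin_cases x <;> fin_cases y <;> simp [*, Ne.symm, eq_comm])
      (by intro x y; fin_cases x <;> fin_cases y <;> simp [*, Ne.symm, eq_comm])
    obtain ⟨e, rfl⟩ := hπ g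
    refine ⟨e * t * e⁻¹, isConj_iff.2 ⟨e, rfl⟩, ?_⟩
    have h0 := hg 0
    have h1 := hg 1
    simp only [Matrix.cons_val_zero, Matrix.cons_val_one] at h0 h1
    rw [map_mul, map_mul, map_inv, ht, ← swap_apply_apply, h0, h1]
end general

theorem coc_norm {G : Type*} [Group G] {f : G → G → ZMod 2} (hf : IsCoc f) (r : ZMod 2) :
    IsCoc (fun g h => f g h - r) := by
  intro g h j
  linear_combination hf g h j

/-- Injectivity: a cocycle with vanishing invariants is a coboundary. -/
theorem coc_trivial {α : Type*} [Fintype α] [DecidableEq α] (f : Perm α → Perm α → ZMod 2)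
    (hf : IsCoc f) (a b c d : α) (hab : a ≠ b) (hac : a ≠ c)
    (had : a ≠ d) (hbc : b ≠ c) (hbd : b ≠ d) (hcd : c ≠ d)
    (h1 : f (swap a b) (swap a b) = f 1 1)
    (h2 : f (swap a b) (swap c d) = f (swap c d) (swap a b)) :
    ∃ x : Perm α → ZMod 2, ∀ g h, x g + x h - x (g * h) = f g h := by
  let F : Perm α → Perm α → ZMod 2 := fun g h => f g h - f 1 1
  have hF : IsCoc F := coc_norm hf _
  have hF1 : F 1 1 = 0 := sub_self _
  let _ := extGroup F hF hF1
  have hmul : ∀ x y : Ext F, x * y = ⟨x.c + y.c + F x.p y.p, x.p * y.p⟩ := fun _ _ => rfl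
  have hone : (1 : Ext F) = ⟨0, 1⟩ := rfl
  let π : Ext F →* Perm α :=
    { toFun := Ext.p, map_one' := rfl, map_mul' := fun _ _ => rfl }
  have hπ : ∀ x : Ext F, π x = x.p := fun _ => rfl
  obtain ⟨s, hs⟩ := exists_section_of_comm π (fun g => ⟨⟨0, g⟩, rfl⟩) ⟨1, 1⟩
    (by
      intro e
      simp [hmul, coc_one_left hF hF1, coc_one_right hF hF1, add_comm])
    (by
      intro e he
      have h01 : ∀ r : ZMod 2, r = 0 ∨ r = 1 := by decide
      rcases h01 e.c with h | h
      · left; exact Ext.ext h he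
      · right; exact Ext.ext h he)
    a b c d hab hac had hbc hbd hcd ⟨0, swap a b⟩ ⟨0, swap c d⟩ rfl rfl
    (by simp [hmul, hone, F, h1])
    (by
      have hd : swap a b * swap c d = swap c d * swap a b := by
        refine (Perm.disjoint_swap_swap ?_).commute
        simp [*]
      simp [hmul, F, h2, hd])
  refine ⟨fun g => (s g).c + f 1 1, fun g h => ?_⟩
  have h3 : (s (g * h)).c = (s g).c + (s h).c + F g h := by
    rw [map_mul, hmul]
    change _ + _ + F (π (s g)) (π (s h)) = _
    rw [hs, hs]
  have h4 : (2 : ZMod 2) = 0 := rfl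
  simp only [h3, F]
  linear_combination (f 1 1 - f g h) * h4

section clifford
variable {G X : Type*} [Group G] [MulAction G X] [Fintype X] [LinearOrder X]

/-- Sign of the product of two ordered monomials in anticommuting variables. -/
def phi (m m' : X → ZMod 2) : ZMod 2 :=
  ∑ P : X, ∑ Q : X, if Q < P then m P * m' Q else 0

/-- Translation action on functions. -/
def act (g : G) (m : X → ZMod 2) : X → ZMod 2 := fun P => m (g⁻¹ • P)

/-- Sign of the action of `g` on an ordered monomial. -/
def qf (g : G) (m : X → ZMod 2) : ZMod 2 :=
  ∑ P : X, ∑ Q : X, if P < Q ∧ g • Q < g • P then m P * m Q else 0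

theorem phi_add_left (m m' n : X → ZMod 2) : phi (m + m') n = phi m n + phi m' n := by
  simp only [phi, ← Finset.sum_add_distrib]
  refine Finset.sum_congr rfl fun P _ => Finset.sum_congr rfl fun Q _ => ?_
  split_ifs <;> simp [add_mul]

theorem phi_add_right (m n n' : X → ZMod 2) : phi m (n + n') = phi m n + phi m n' := by
  simp only [phi, ← Finset.sum_add_distrib]
  refine Finset.sum_congr rfl fun P _ => Finset.sum_congr rfl fun Q _ => ?_
  split_ifs <;> simp [mul_add]

theorem sum_act (g : G) (F : X → X → ZMod 2) :
    ∑ P : X, ∑ Q : X, F P Q = ∑ P : X, ∑ Q : X, F (g • P) (g • Q) := by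
  rw [← Equiv.sum_comp (MulAction.toPerm g)]
  refine Finset.sum_congr rfl fun P _ => ?_
  rw [← Equiv.sum_comp (MulAction.toPerm g)]
  rfl

theorem phi_act (g : G) (m m' : X → ZMod 2) :
    phi (act g m) (act g m') = ∑ P : X, ∑ Q : X, if g • Q < g • P then m P * m' Q else 0 := by
  rw [phi, sum_act g]
  simp [act]

theorem qf_add (g : G) (m m' : X → ZMod 2) :
    qf g (m + m') = qf g m + qf g m' + phi (act g m) (act g m') + phi m m' := by
  have h1 : qf g (m + m') = qf g m + qf g m' +
      (∑ P : X, ∑ Q : X, (if P < Q ∧ g • Q < g • P then m P * m' Q else 0) +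
       ∑ P : X, ∑ Q : X, (if P < Q ∧ g • Q < g • P then m' P * m Q else 0)) := by
    simp only [qf, ← Finset.sum_add_distrib]
    refine Finset.sum_congr rfl fun P _ => Finset.sum_congr rfl fun Q _ => ?_
    split_ifs
    · simp only [Pi.add_apply]; ring
    · simp
  have h2 : (∑ P : X, ∑ Q : X, (if P < Q ∧ g • Q < g • P then m P * m' Q else 0) +
       ∑ P : X, ∑ Q : X, (if P < Q ∧ g • Q < g • P then m' P * m Q else 0)) =
       phi (act g m) (act g m') + phi m m' := by
    rw [phi_act, phi, Finset.sum_comm (f := fun P Q => if P < Q ∧ g • Q < g • P then m' P * m Q else 0)]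
    simp only [← Finset.sum_add_distrib]
    refine Finset.sum_congr rfl fun P _ => Finset.sum_congr rfl fun Q _ => ?_
    rcases lt_trichotomy P Q with h | h | h
    · rcases lt_trichotomy (g • P) (g • Q) with h' | h' | h'
      · simp [h, h', h.not_gt, h'.not_gt]
      · exact absurd (smul_left_cancel g h') h.ne
      · simp [h, h', h.not_gt, h'.not_gt]
    · subst h; simp
    · rcases lt_trichotomy (g • P) (g • Q) with h' | h' | h'
      · simp [h, h', h.not_gt, h'.not_gt, mul_comm]
      · exact absurd (smul_left_cancel g h') h.ne'
      · simp [h, h', h.not_gt, h'.not_gt, CharTwo.add_self_eq_zero]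
  rw [h1, h2]; ring

theorem sum_half (F : X → X → ZMod 2) (hF : ∀ P, F P P = 0) :
    ∑ P : X, ∑ Q : X, F P Q = ∑ P : X, ∑ Q : X, if P < Q then F P Q + F Q P else 0 := by
  have h : ∀ P Q, F P Q = (if P < Q then F P Q else 0) + (if Q < P then F P Q else 0) := by
    intro P Q
    rcases lt_trichotomy P Q with h | h | h
    · simp [h, h.not_gt]
    · subst h; simp [hF]
    · simp [h, h.not_gt]
  conv_lhs => 
    enter [2, P, 2, Q]
    rw [h P Q]
  simp only [Finset.sum_add_distrib]
  rw [Finset.sum_comm (f := fun P Q => if Q < P then F P Q else 0)]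
  simp only [← Finset.sum_add_distrib]
  refine Finset.sum_congr rfl fun P _ => Finset.sum_congr rfl fun Q _ => ?_
  split_ifs <;> simp

theorem qf_mul (g h : G) (m : X → ZMod 2) : qf (g * h) m = qf h m + qf g (act h m) := by
  have h1 : qf g (act h m) =
      ∑ P : X, ∑ Q : X, if h • P < h • Q ∧ (g * h) • Q < (g * h) • P then m P * m Q else 0 := by
    rw [qf, sum_act h]
    simp [act, mul_smul]
  rw [h1, sum_half _ (by simp)]
  simp only [qf, ← Finset.sum_add_distrib]
  refine Finset.sum_congr rfl fun P _ => Finset.sum_congr rfl fun Q _ => ?_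
  rcases lt_trichotomy P Q with hl | hl | hl
  · have a1 : h • P ≠ h • Q := fun e => hl.ne (smul_left_cancel h e)
    have a2 : (g * h) • P ≠ (g * h) • Q := fun e => hl.ne (smul_left_cancel _ e)
    rcases a1.lt_or_gt with h' | h' <;> rcases a2.lt_or_gt with h'' | h'' <;>
    simp [hl, h', h'', h'.not_gt, h''.not_gt, mul_comm, CharTwo.add_self_eq_zero]
  · subst hl; simp
  · simp [hl.not_gt]

theorem coc_clifford (I : G → X → ZMod 2) (hI : ∀ g h, I (g * h) = I g + act g (I h)) :
    IsCoc (fun g h => phi (I g) (act g (I h)) + qf g (I h)) := by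
  intro g h j
  have act_add : ∀ (g : G) (m m' : X → ZMod 2), act g (m + m') = act g m + act g m' :=
    fun _ _ _ => rfl
  have act_mul : ∀ (g h : G) (m : X → ZMod 2), act (g * h) m = act g (act h m) := by
    intro g h m; funext P; simp [act, mul_smul]
  have h2 : (2 : ZMod 2) = 0 := rfl
  simp only [hI, act_add, act_mul, phi_add_left, phi_add_right, qf_add, qf_mul]
  linear_combination (- phi (I h) (act h (I j))) * h2

end clifford

theorem coc_cup {G : Type*} [Group G] (s : G → ZMod 2) (hs : ∀ g h, s (g * h) = s g + s h) :
    IsCoc (fun g h => s g * s h) := by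
  intro g h j
  simp only [hs]; ring


section pairs
variable {n : ℕ}

/-- Minimum of a pair. -/
def mn (P : Xk n) : Fin n :=
  P.1.min' (Finset.card_pos.1 (by rw [P.2]; norm_num))

theorem mn_mem (P : Xk n) : mn P ∈ P.1 := Finset.min'_mem _ _

theorem mn_le (P : Xk n) {y : Fin n} (hy : y ∈ P.1) : mn P ≤ y := Finset.min'_le _ _ hy

theorem mem_smul_iff (g : Perm (Fin n)) (P : Xk n) (x : Fin n) : g x ∈ (g • P).1 ↔ x ∈ P.1 := by
  change g • x ∈ g • P.1 ↔ _
  exact Finset.smul_mem_smul_finset_iff g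

theorem mem_inv_smul_iff (g : Perm (Fin n)) (P : Xk n) (x : Fin n) :
    x ∈ (g⁻¹ • P).1 ↔ g x ∈ P.1 := by
  rw [← mem_smul_iff g (g⁻¹ • P), smul_inv_smul]

/-- Inversion cocycle. -/
def Inv (g : Perm (Fin n)) (P : Xk n) : ZMod 2 := if g (mn (g⁻¹ • P)) = mn P then 0 else 1

theorem two_of_three {P : Xk n} {a b c : Fin n} (ha : a ∈ P.1) (hb : b ∈ P.1) (hc : c ∈ P.1) :
    (if c = a then (0 : ZMod 2) else 1) = (if b = a then 0 else 1) + (if c = b then 0 else 1) := by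
  obtain ⟨x, y, hxy, hP⟩ := Finset.card_eq_two.1 P.2
  rw [hP] at ha hb hc
  simp only [Finset.mem_insert, Finset.mem_singleton] at ha hb hc
  have h2 : (0 : ZMod 2) = 1 + 1 := rfl
  rcases ha with rfl | rfl <;> rcases hb with rfl | rfl <;> rcases hc with rfl | rfl <;>
    simp [hxy, hxy.symm, ← h2]

theorem Inv_mul (g h : Perm (Fin n)) : Inv (g * h) = Inv g + act g (Inv h) := by
  funext P
  simp only [Pi.add_apply, act, Inv]
  have hb : g (mn (g⁻¹ • P)) ∈ P.1 := by rw [← mem_inv_smul_iff]; exact mn_mem _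
  have hc : (g * h) (mn ((g * h)⁻¹ • P)) ∈ P.1 := by
    rw [← mem_inv_smul_iff]; exact mn_mem _
  rw [two_of_three (mn_mem P) hb hc]
  simp [mul_smul]

theorem swap_lt {i j w v : Fin n} (hij : i.val + 1 = j.val) (hwv : w < v)
    (h : ¬ (w = i ∧ v = j)) : swap i j w < swap i j v := by
  simp only [swap_apply_def, Fin.ext_iff, Fin.lt_def] at *
  split_ifs <;> omega

/-- A pair. -/
def mkPair (i j : Fin n) (h : i ≠ j) : Xk n := ⟨{i, j}, Finset.card_pair h⟩

theorem eq_mkPair {P : Xk n} {i j : Fin n} (h : i ≠ j) (hi : i ∈ P.1) (hj : j ∈ P.1) :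
    P = mkPair i j h := by
  refine Subtype.ext (Finset.eq_of_subset_of_card_le ?_ ?_).symm
  · intro x hx
    simp only [mkPair, Finset.mem_insert, Finset.mem_singleton] at hx
    rcases hx with rfl | rfl <;> assumption
  · rw [P.2, (mkPair i j h).2]

theorem Inv_swap {i j : Fin n} (hij : i.val + 1 = j.val) (h : i ≠ j) :
    Inv (swap i j) = Pi.single (mkPair i j h) 1 := by
  funext P
  by_cases hP : P = mkPair i j h
  · rw [hP, Pi.single_eq_same, Inv, if_neg]
    have e : (swap i j)⁻¹ • mkPair i j h = mkPair i j h := by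
      apply eq_mkPair <;> rw [mem_inv_smul_iff] <;> simp [mkPair]
    rw [e]
    intro h3
    have h4 := mn_mem (mkPair i j h)
    simp only [mkPair, Finset.mem_insert, Finset.mem_singleton] at h4
    rcases h4 with h4 | h4
    · change mn (mkPair i j h) = i at h4
      rw [h4, swap_apply_left] at h3
      exact h h3.symm
    · change mn (mkPair i j h) = j at h4
      rw [h4, swap_apply_right] at h3
      exact h h3
  · rw [Pi.single_eq_of_ne hP, Inv, if_pos]
    have hw : swap i j (mn ((swap i j)⁻¹ • P)) ∈ P.1 := by
      rw [← mem_inv_smul_iff]; exact mn_mem _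
    refine le_antisymm ?_ (mn_le _ hw)
    have hy : swap i j (mn P) ∈ ((swap i j)⁻¹ • P).1 := by
      rw [mem_inv_smul_iff]; simpa using mn_mem P
    rcases (mn_le _ hy).eq_or_lt with h1 | h1
    · rw [h1, swap_apply_self]
    · have := swap_lt hij h1 (by
        rintro ⟨h5, h6⟩
        rw [h5, swap_apply_left] at hw
        have h7 : mn P = i := by rw [← swap_apply_self i j (mn P), h6, swap_apply_right]
        exact hP (eq_mkPair h (h7 ▸ mn_mem P) hw))
      rw [swap_apply_self] at this
      exact this.le

theorem phi_single {X : Type*} [Fintype X] [LinearOrder X] [DecidableEq X] (A B : X) :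
    phi (Pi.single A 1) (Pi.single B 1) = if B < A then 1 else 0 := by
  rw [phi, Finset.sum_eq_single A, Finset.sum_eq_single B]
  · simp
  · intro Q _ hQ; simp [hQ]
  · simp
  · intro P _ hP; simp [hP]
  · simp

theorem qf_single {G X : Type*} [Group G] [MulAction G X] [Fintype X] [LinearOrder X]
    [DecidableEq X] (g : G) (B : X) : qf g (Pi.single B 1) = 0 := by
  refine Finset.sum_eq_zero fun P _ => Finset.sum_eq_zero fun Q _ => ?_
  split_ifs with h
  · by_cases hP : P = B
    · have hQ : Q ≠ B := by rintro rfl; exact h.1.ne hP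
      simp [hQ]
    · simp [hP]
  · rfl

theorem act_single {G X : Type*} [Group G] [MulAction G X] [DecidableEq X] (g : G)
    (B : X) (h : g • B = B) : act g (Pi.single B 1) = Pi.single B 1 := by
  funext P
  simp only [act, Pi.single_apply]
  have : g⁻¹ • P = B ↔ P = B := by rw [inv_smul_eq_iff, h]
  simp [this]

theorem exists_coc_comm (a b c d : Fin n) (hab : a.val + 1 = b.val) (hbc : b.val < c.val)
    (hcd : c.val + 1 = d.val) : ∃ f : Perm (Fin n) → Perm (Fin n) → ZMod 2, IsCoc f ∧
      f (swap a b) (swap c d) - f (swap c d) (swap a b) = 1 := by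
  have hab' : a ≠ b := by rintro rfl; omega
  have hcd' : c ≠ d := by rintro rfl; omega
  have hac : a ≠ c := by rintro rfl; omega
  have had : a ≠ d := by rintro rfl; omega
  have hbc : b ≠ c := by rintro rfl; omega
  have hbd : b ≠ d := by rintro rfl; omega
  let _ : LinearOrder (Xk n) := LinearOrder.lift' (Fintype.equivFin (Xk n))
    (Fintype.equivFin (Xk n)).injective
  refine ⟨_, coc_clifford (X := Xk n) Inv Inv_mul, ?_⟩
  have e1 : swap a b • mkPair c d hcd' = mkPair c d hcd' := by
    rw [← swap_inv]
    apply eq_mkPair <;> rw [mem_inv_smul_iff, swap_apply_of_ne_of_ne] <;>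
      simp [mkPair, *, Ne.symm]
  have e2 : swap c d • mkPair a b hab' = mkPair a b hab' := by
    rw [← swap_inv]
    apply eq_mkPair <;> rw [mem_inv_smul_iff, swap_apply_of_ne_of_ne] <;>
      simp [mkPair, *, Ne.symm]
  have hne : mkPair a b hab' ≠ mkPair c d hcd' := by
    intro h
    have : a ∈ (mkPair c d hcd').1 := by rw [← h]; simp [mkPair]
    simp [mkPair, hac, had] at this
  have i1 := Inv_swap hab hab'
  have i2 := Inv_swap hcd hcd'
  change (phi (Inv (swap a b)) (act (swap a b) (Inv (swap c d))) +
      qf (swap a b) (Inv (swap c d))) - (phi (Inv (swap c d)) (act (swap c d) (Inv (swap a b))) +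
      qf (swap c d) (Inv (swap a b))) = 1
  rw [i1, i2, act_single _ _ e1, act_single _ _ e2, phi_single, phi_single, qf_single, qf_single]
  rcases hne.lt_or_gt with h | h
  · simp [h, h.not_gt]
  · simp [h, h.not_gt]

theorem exists_coc_sq (a b c d : Fin n) (hab : a ≠ b) (hcd : c ≠ d) :
    ∃ f : Perm (Fin n) → Perm (Fin n) → ZMod 2, IsCoc f ∧
      f (swap a b) (swap a b) - f 1 1 = 1 ∧
      f (swap a b) (swap c d) - f (swap c d) (swap a b) = 0 := by
  let s : Perm (Fin n) → ZMod 2 := fun g => if Perm.sign g = 1 then 0 else 1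
  have hs : ∀ g h, s (g * h) = s g + s h := by
    intro g h
    have h2 : (0 : ZMod 2) = 1 + 1 := rfl
    rcases Int.units_eq_one_or (Perm.sign g) with hg | hg <;>
    rcases Int.units_eq_one_or (Perm.sign h) with hh | hh <;>
    simp [s, hg, hh, ← h2]
  refine ⟨_, coc_cup s hs, ?_, ?_⟩
  · simp [s, Perm.sign_swap hab]
  · simp [s, Perm.sign_swap hab, Perm.sign_swap hcd]

end pairs

open groupCohomology CategoryTheory

theorem mem_coc_iff {Y : Type} [Group Y] (f : Y × Y → ZMod 2) :
    f ∈ cocycles₂ (Rep.trivial (ZMod 2) Y (ZMod 2)) ↔ IsCoc (fun g h => f (g, h)) := by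
  rw [mem_cocycles₂_iff]
  rfl

theorem mem_cob_iff {Y : Type} [Group Y] (f : Y × Y → ZMod 2) :
    f ∈ coboundaries₂ (Rep.trivial (ZMod 2) Y (ZMod 2)) ↔
      ∃ x : Y → ZMod 2, ∀ g h, x g + x h - x (g * h) = f (g, h) := by
  constructor
  · rintro ⟨x, rfl⟩
    refine ⟨x, fun g h => ?_⟩
    simp [d₁₂]
    ring
  · rintro ⟨x, hx⟩
    refine ⟨x, ?_⟩
    funext ⟨g, h⟩
    rw [← hx]
    simp [d₁₂]
    ring

/-- The two invariants. -/
def inv2 {Y : Type} [Group Y] (τ σ : Y) : (Y × Y → ZMod 2) →ₗ[ZMod 2] ZMod 2 × ZMod 2 where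
  toFun f := (f (τ, τ) - f (1, 1), f (τ, σ) - f (σ, τ))
  map_add' f g := by ext <;> simp <;> ring
  map_smul' r f := by ext <;> simp <;> ring

theorem finrank_H2 {Y : Type} [Group Y] {n : ℕ} (hn : 4 ≤ n) (e : Y ≃* Perm (Fin n)) :
    Module.finrank (ZMod 2) (groupCohomology (Rep.trivial (ZMod 2) Y (ZMod 2)) 2) = 2 := by
  let a : Fin n := ⟨0, by omega⟩
  let b : Fin n := ⟨1, by omega⟩
  let c : Fin n := ⟨2, by omega⟩
  let d : Fin n := ⟨3, by omega⟩
  have hab : a ≠ b := by simp [a, b]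
  have hac : a ≠ c := by simp [a, c]
  have had : a ≠ d := by simp [a, d]
  have hbc : b ≠ c := by simp [b, c]
  have hbd : b ≠ d := by simp [b, d]
  have hcd : c ≠ d := by simp [c, d]
  let A := Rep.trivial (ZMod 2) Y (ZMod 2)
  let τ := e.symm (swap a b)
  let σ := e.symm (swap c d)
  have hτσ : τ * σ = σ * τ := by
    rw [← map_mul, ← map_mul, ((Perm.disjoint_swap_swap (by simp [*])).commute : Commute _ _).eq]
  have hττ : τ * τ = 1 := by
    rw [← map_mul, swap_mul_self, map_one]
  let Ψ : cocycles₂ A →ₗ[ZMod 2] ZMod 2 × ZMod 2 := (inv2 τ σ).comp (cocycles₂ A).subtype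
  let Φ : cocycles₂ A →ₗ[ZMod 2] H2 A := (H2π A).hom
  have hΦ : Function.Surjective Φ := (ModuleCat.epi_iff_surjective _).1 inferInstance
  have htr : ∀ f : Perm (Fin n) → Perm (Fin n) → ZMod 2, IsCoc f →
      (fun p : Y × Y => f (e p.1) (e p.2)) ∈ cocycles₂ A := by
    intro f hf
    rw [mem_coc_iff]
    intro g h j
    simpa using hf (e g) (e h) (e j)
  have hΨ : Function.Surjective Ψ := by
    obtain ⟨f₁, h1, h1a, h1c⟩ := exists_coc_sq a b c d hab hcd
    obtain ⟨f₂, h2, h2c⟩ := exists_coc_comm a b c d rfl (by simp [b, c]) rfl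
    let F₁ : cocycles₂ A := ⟨_, htr f₁ h1⟩
    let F₂ : cocycles₂ A := ⟨_, htr f₂ h2⟩
    have e1 : Ψ F₁ = (1, 0) := by
      apply Prod.ext
      · change f₁ (e τ) (e τ) - f₁ (e 1) (e 1) = 1
        simpa [τ] using h1a
      · change f₁ (e τ) (e σ) - f₁ (e σ) (e τ) = 0
        simpa [τ, σ] using h1c
    have e2 : (Ψ F₂).2 = 1 := by
      change f₂ (e τ) (e σ) - f₂ (e σ) (e τ) = 1
      simpa [τ, σ] using h2c
    rintro ⟨u, v⟩
    refine ⟨(u - v * (Ψ F₂).1) • F₁ + v • F₂, ?_⟩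
    rw [map_add, map_smul, map_smul, e1]
    apply Prod.ext <;> simp [e2]
  have hker : LinearMap.ker Φ = LinearMap.ker Ψ := by
    ext f
    rw [LinearMap.mem_ker, LinearMap.mem_ker]
    have h0 : Φ f = 0 ↔ _ := H2π_eq_zero_iff (A := A) f
    rw [h0, mem_cob_iff]
    constructor
    · rintro ⟨x, hx⟩
      apply Prod.ext
      · change f (τ, τ) - f (1, 1) = 0
        rw [← hx, ← hx, hττ]
        have h2 : (2 : ZMod 2) = 0 := rfl
        simp only [mul_one]
        linear_combination (x τ - x 1) * h2
      · change f (τ, σ) - f (σ, τ) = 0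
        rw [← hx, ← hx, hτσ]
        ring
    · intro h
      have h1 : f (τ, τ) - f (1, 1) = 0 := congrArg Prod.fst h
      have h2 : f (τ, σ) - f (σ, τ) = 0 := congrArg Prod.snd h
      have hf := (mem_coc_iff _).1 f.2
      obtain ⟨x, hx⟩ := coc_trivial (fun g h => f (e.symm g, e.symm h))
        (by
          intro g h j
          simpa using hf (e.symm g) (e.symm h) (e.symm j))
        a b c d hab hac had hbc hbd hcd (by simpa using sub_eq_zero.1 h1) (sub_eq_zero.1 h2)
      refine ⟨fun g => x (e g), fun g h => ?_⟩
      simpa using hx (e g) (e h)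
  have E1 := Φ.quotKerEquivOfSurjective hΦ
  have E2 := Ψ.quotKerEquivOfSurjective hΨ
  have E3 := Submodule.quotEquivOfEq _ _ hker
  have E := E1.symm.trans (E3.trans E2)
  change Module.finrank (ZMod 2) (H2 A) = 2
  rw [E.finrank_eq]
  simp
section shapiro
variable {k : ℕ}

theorem alt_smul (g : alternatingGroup (Fin k)) (P : Xk k) : g • P = g.1 • P := rfl

/-- The stabilizer of the pair `{a, b}` in the alternating group. -/
abbrev Yst (a b : Fin k) (hab : a ≠ b) : Subgroup (alternatingGroup (Fin k)) :=
  MulAction.stabilizer (alternatingGroup (Fin k)) (mkPair a b hab)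

theorem Yst_mem {a b : Fin k} {hab : a ≠ b} (y : Yst a b hab) (x : Fin k) :
    y.1.1 x ∈ (mkPair a b hab).1 ↔ x ∈ (mkPair a b hab).1 := by
  have h : y.1.1 • mkPair a b hab = mkPair a b hab := y.2
  rw [← mem_smul_iff y.1.1 (mkPair a b hab) x, h]

theorem mem_pair {a b : Fin k} {hab : a ≠ b} {x : Fin k} :
    x ∈ (mkPair a b hab).1 ↔ x = a ∨ x = b := by
  simp [mkPair]

/-- Restriction to the complement of the pair. -/
def resHom (a b : Fin k) (hab : a ≠ b) :
    Yst a b hab →* Perm {x : Fin k // x ∉ (mkPair a b hab).1} where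
  toFun y := y.1.1.subtypePerm (fun x => not_iff_not.2 (Yst_mem y x))
  map_one' := by ext; simp
  map_mul' _ _ := rfl

theorem resHom_apply {a b : Fin k} {hab : a ≠ b} (y : Yst a b hab)
    (x : {x : Fin k // x ∉ (mkPair a b hab).1}) : (resHom a b hab y x : Fin k) = y.1.1 x := rfl

theorem resHom_bij (a b : Fin k) (hab : a ≠ b) : Function.Bijective (resHom a b hab) := by
  constructor
  · rw [injective_iff_map_eq_one]
    intro y hy
    have hfix : ∀ x, x ≠ a → x ≠ b → y.1.1 x = x := by
      intro x hxa hxb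
      have := resHom_apply y ⟨x, by simp [mem_pair, hxa, hxb]⟩
      rw [hy] at this
      exact this.symm
    have ha : y.1.1 a = a ∨ y.1.1 a = b := mem_pair.1 ((Yst_mem y a).2 (mem_pair.2 (Or.inl rfl)))
    have hb : y.1.1 b = a ∨ y.1.1 b = b := mem_pair.1 ((Yst_mem y b).2 (mem_pair.2 (Or.inr rfl)))
    rcases ha with ha | ha
    · have hb : y.1.1 b = b := hb.resolve_left fun h => hab (y.1.1.injective (ha.trans h.symm))
      refine Subtype.ext (Subtype.ext (Equiv.ext fun x => ?_))
      by_cases hxa : x = a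
      · subst hxa; exact ha
      by_cases hxb : x = b
      · subst hxb; exact hb
      exact hfix x hxa hxb
    · exfalso
      have hb : y.1.1 b = a := hb.resolve_right fun h => hab (y.1.1.injective (ha.trans h.symm))
      have h1 : y.1.1 = swap a b := by
        refine Equiv.ext fun x => ?_
        by_cases hxa : x = a
        · subst hxa; rw [ha, swap_apply_left]
        by_cases hxb : x = b
        · subst hxb; rw [hb, swap_apply_right]
        rw [hfix x hxa hxb, swap_apply_of_ne_of_ne hxa hxb]
      have h2 := Perm.mem_alternatingGroup.1 y.1.2
      rw [h1, Perm.sign_swap hab] at h2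
      exact absurd h2 (by decide)
  · intro g
    have hst : ∀ h : alternatingGroup (Fin k), (h.1 a ∈ (mkPair a b hab).1) →
        (h.1 b ∈ (mkPair a b hab).1) → h ∈ Yst a b hab := by
      intro h h1 h2
      rw [← inv_mem_iff, MulAction.mem_stabilizer_iff, alt_smul]
      apply eq_mkPair
      · exact (mem_inv_smul_iff h.1 _ _).2 h1
      · exact (mem_inv_smul_iff h.1 _ _).2 h2
    have ga : Perm.ofSubtype g a = a := Perm.ofSubtype_apply_of_not_mem _ (by simp [mem_pair])
    have gb : Perm.ofSubtype g b = b := Perm.ofSubtype_apply_of_not_mem _ (by simp [mem_pair])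
    rcases Int.units_eq_one_or (Perm.sign g) with hg | hg
    · refine ⟨⟨⟨Perm.ofSubtype g, ?_⟩, hst _ ?_ ?_⟩, ?_⟩
      · rw [Perm.mem_alternatingGroup, Perm.sign_ofSubtype, hg]
      · simp [ga, mem_pair]
      · simp [gb, mem_pair]
      · refine Equiv.ext fun x => Subtype.ext ?_
        rw [resHom_apply]
        simp
    · refine ⟨⟨⟨swap a b * Perm.ofSubtype g, ?_⟩, hst _ ?_ ?_⟩, ?_⟩
      · rw [Perm.mem_alternatingGroup, Perm.sign_mul, Perm.sign_ofSubtype, hg,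
          Perm.sign_swap hab]; rfl
      · simp [ga, mem_pair]
      · simp [gb, mem_pair]
      · refine Equiv.ext fun x => Subtype.ext ?_
        rw [resHom_apply]
        have := (g x).2
        rw [mem_pair, not_or] at this
        simp [swap_apply_of_ne_of_ne this.1 this.2]

theorem alt_trans (a b : Fin k) (hab : a ≠ b) (P : Xk k) :
    ∃ g : alternatingGroup (Fin k), g • mkPair a b hab = P := by
  obtain ⟨x, y, hxy, hP⟩ := Finset.card_eq_two.1 P.2
  obtain ⟨g, hg⟩ := Perm.exists_extending_pair ![a, b] ![x, y]
      (by intro x y; fin_cases x <;> fin_cases y <;> simp [*, Ne.symm, eq_comm])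
      (by intro x y; fin_cases x <;> fin_cases y <;> simp [*, Ne.symm, eq_comm])
  have h0 : g a = x := hg 0
  have h1 : g b = y := hg 1
  have key : ∀ h : alternatingGroup (Fin k), h.1 a ∈ P.1 → h.1 b ∈ P.1 →
      h • mkPair a b hab = P := by
    intro h h1 h2
    rw [eq_comm, ← inv_smul_eq_iff]
    apply eq_mkPair
    · exact (mem_inv_smul_iff h.1 _ _).2 h1
    · exact (mem_inv_smul_iff h.1 _ _).2 h2
  rcases Int.units_eq_one_or (Perm.sign g) with hs | hs
  · exact ⟨⟨g, Perm.mem_alternatingGroup.2 hs⟩, key _ (by simp [h0, hP]) (by simp [h1, hP])⟩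
  · refine ⟨⟨g * swap a b, Perm.mem_alternatingGroup.2 ?_⟩, key _ ?_ ?_⟩
    · rw [Perm.sign_mul, hs, Perm.sign_swap hab]; rfl
    · simp [h1, hP]
    · simp [h0, hP]

end shapiro

section coind
variable {G X : Type} [Group G] [MulAction G X]

/-- The permutation module on a transitive `G`-set is coinduced from a stabilizer. -/
noncomputable def permEquiv (P : X) (hP : ∀ Q : X, ∃ g : G, g • P = Q) :
    (permRep (ZMod 2) G X).Equiv (Representation.coind (MulAction.stabilizer G P).subtype
      (Rep.trivial (ZMod 2) (MulAction.stabilizer G P) (ZMod 2)).ρ) :=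
  let L : (X → ZMod 2) →ₗ[ZMod 2] Representation.coindV (MulAction.stabilizer G P).subtype
      (Rep.trivial (ZMod 2) (MulAction.stabilizer G P) (ZMod 2)).ρ :=
    { toFun := fun v => ⟨fun g => v (g⁻¹ • P), by
        intro s h
        have : (s.1)⁻¹ • P = P := inv_smul_eq_iff.2 s.2.symm
        simp [mul_smul, this]⟩
      map_add' := fun _ _ => rfl
      map_smul' := fun _ _ => rfl }
  have hL : ∀ v g, (L v).1 g = v (g⁻¹ • P) := fun _ _ => rfl
  have hbij : Function.Bijective L := by
    constructor
    · intro v w h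
      funext Q
      obtain ⟨g, rfl⟩ := hP Q
      have := congrArg (fun f => f.1 g⁻¹) h
      simpa [hL] using this
    · intro f
      choose γ hγ using hP
      refine ⟨fun Q => f.1 (γ Q)⁻¹, Subtype.ext (funext fun g => ?_)⟩
      rw [hL]
      have h1 := hγ (g⁻¹ • P)
      have h2 := f.2 ⟨(γ (g⁻¹ • P))⁻¹ * g⁻¹, by
        rw [MulAction.mem_stabilizer_iff, mul_smul, inv_smul_eq_iff, h1]⟩ g
      simpa using h2
  Representation.IntertwiningMap.ofBijective
    { toLinearMap := L
      isIntertwining' := by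
        intro g
        refine LinearMap.ext fun v => Subtype.ext (funext fun h => ?_)
        change v (g⁻¹ • h⁻¹ • P) = v ((h * g)⁻¹ • P)
        rw [mul_inv_rev, mul_smul] } hbij

end coind
end H2Sym

/-- **(Guralnick–Liebeck, Lemma 4.1(ii).)** For `k ≥ 10`, `G = A_k` and
`P = 𝔽₂↑_Y^G` the permutation module of `G` on 2-subsets of `{1,…,k}` over `𝔽₂`
(where `Y ≅ S_{k-2}` is the stabilizer of a 2-subset), the second cohomology group
`H²(G, P)` has dimension 2 over `𝔽₂`. -/
theorem dim_H2_perm_module_eq_two (k : ℕ) (hk : 10 ≤ k) :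
    Module.finrank (ZMod 2)
      (groupCohomology (Rep.of (permRep (ZMod 2) (alternatingGroup (Fin k)) (Xk k))) 2)
      = 2 := by
  have hab : (⟨0, by omega⟩ : Fin k) ≠ ⟨1, by omega⟩ := by simp
  let P := H2Sym.mkPair _ _ hab
  let S := MulAction.stabilizer (alternatingGroup (Fin k)) P
  let i1 := (groupCohomology.functor (ZMod 2) (alternatingGroup (Fin k)) 2).mapIso
    (Rep.mkIso (H2Sym.permEquiv P (H2Sym.alt_trans _ _ hab)))
  let i2 := groupCohomology.coindIso (Rep.trivial (ZMod 2) S (ZMod 2)) 2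
  refine (LinearEquiv.finrank_eq (i1.toLinearEquiv.trans i2.toLinearEquiv)).trans ?_
  have hcard : Fintype.card {x : Fin k // x ∉ P.1} = k - 2 := by
    rw [Fintype.card_subtype_compl, Fintype.card_coe, P.2, Fintype.card_fin]
  exact H2Sym.finrank_H2 (n := k - 2) (by omega)
    ((MulEquiv.ofBijective _ (H2Sym.resHom_bij _ _ hab)).trans
      (Fintype.equivFinOfCardEq hcard).permCongrHom)
end

section
/- Let k ≡ 3 (mod 4), k ≥ 7, and let P be the 𝔽₂ A_k-permutation module on 2-subsets of {1,...,k}, with standard orthonormal basis {e_{ij}} and G-invariant bilinear form (·,·). Set f = Σ_{i<j} e_{ij}, P₁ = 𝔽₂ f, P₂ = span{x_i : 1 ≤ i ≤ k} where x_i = Σ_{j≠i} e_{ij}, and P₃ = (P₁ + P₂)^⊥. Then P = P₁ ⊕ P₂ ⊕ P₃ with each summand an irreducible 𝔽₂ A_k-module, dim P₂ = k-1, and the element u = Σ_{2<i<j} e_{ij} lies in P₃. -/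
open Pointwise

variable {F G V : Type*} [CommRing F] [Group G] [AddCommGroup V] [Module F V]

/-- A submodule invariant under a representation. -/
def InvSub (ρ : Representation F G V) (U : Submodule F V) : Prop :=
  ∀ g, ∀ v ∈ U, ρ g v ∈ U

/-- An irreducible (simple) invariant submodule. -/
def IsIrreducibleSub (ρ : Representation F G V) (U : Submodule F V) : Prop :=
  InvSub ρ U ∧ U ≠ ⊥ ∧ ∀ W ≤ U, InvSub ρ W → W = ⊥ ∨ W = U

/-- The linear functional `v ↦ ∑_s w s * v s` (standard bilinear form against `w`,
for which the standard basis `{e_s}` is orthonormal). -/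
noncomputable def formMap {X : Type*} [Fintype X] [DecidableEq X] (F : Type*) [CommRing F]
    (w : X → F) : (X → F) →ₗ[F] F :=
  ∑ q : X, w q • (LinearMap.proj q : (X → F) →ₗ[F] F)

/-- Orthogonal complement of `U` with respect to the standard form. -/
noncomputable def perpSub {X : Type*} [Fintype X] [DecidableEq X] (F : Type*) [CommRing F]
    (U : Submodule F (X → F)) : Submodule F (X → F) :=
  ⨅ w : U, LinearMap.ker (formMap F (w : X → F))

/-- `f = Σ_{i<j} e_{ij}`: the all-ones vector. -/
def allOnes (k : ℕ) : Xk k → ZMod 2 := fun _ => 1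

/-- `x_i = Σ_j e_{ij}`: the sum of basis vectors over pairs containing `i`. -/
def xVec (k : ℕ) (i : Fin k) : Xk k → ZMod 2 := fun s => if i ∈ s.1 then 1 else 0

/-- `u = Σ_{2<i<j} e_{ij}`: the sum over pairs avoiding `{1,2}` (`{0,1}` in `Fin k`). -/
def uVec (k : ℕ) (hk : 2 ≤ k) : Xk k → ZMod 2 := fun s =>
  if (⟨0, by omega⟩ : Fin k) ∈ s.1 ∨ (⟨1, by omega⟩ : Fin k) ∈ s.1 then 0 else 1

/-- `P₁ = 𝔽₂·f`. -/
def P1 (k : ℕ) : Submodule (ZMod 2) (Xk k → ZMod 2) :=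
  Submodule.span (ZMod 2) {allOnes k}

/-- `P₂ = span{x_i}`, the image of the permutation module on points. -/
def P2 (k : ℕ) : Submodule (ZMod 2) (Xk k → ZMod 2) :=
  Submodule.span (ZMod 2) (Set.range (xVec k))

/-- `P₃ = (P₁ + P₂)^⊥`. -/
noncomputable def P3 (k : ℕ) : Submodule (ZMod 2) (Xk k → ZMod 2) :=
  perpSub (ZMod 2) (P1 k ⊔ P2 k)

namespace PermAux

variable {k : ℕ}

/-- The action of a permutation on vectors. -/
def act (g : Equiv.Perm (Fin k)) (v : Xk k → ZMod 2) : Xk k → ZMod 2 := fun s => v (g⁻¹ • s)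

/-- The basis vector of the edge `ab` (zero if `a = b`). -/
def ed (a b : Fin k) : Xk k → ZMod 2 := fun s => if s.1 = {a, b} then 1 else 0

/-- The 2-subset `ab`. -/
def pr (a b : Fin k) (h : a ≠ b) : Xk k := ⟨{a, b}, Finset.card_pair h⟩

/-- The coordinate of `v` at the edge `ab` (zero if `a = b`). -/
def co (v : Xk k → ZMod 2) (a b : Fin k) : ZMod 2 := if h : a ≠ b then v (pr a b h) else 0

/-- The 4-cycle with parts `ab` and `cd`. -/
def cyc (a b c d : Fin k) : Xk k → ZMod 2 := ed a c + ed a d + ed b c + ed b d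

lemma permRep_eq (g : alternatingGroup (Fin k)) (v : Xk k → ZMod 2) :
    permRep (ZMod 2) (alternatingGroup (Fin k)) (Xk k) g v = act (g : Equiv.Perm (Fin k)) v := rfl

lemma smul_val (g : Equiv.Perm (Fin k)) (s : Xk k) : (g • s).1 = g • s.1 := rfl

lemma co_self (v : Xk k → ZMod 2) (a : Fin k) : co v a a = 0 := by simp [co]

lemma co_symm (v : Xk k → ZMod 2) (a b : Fin k) : co v a b = co v b a := by
  unfold co
  by_cases h : a = b
  · simp [h]
  · have h' : b ≠ a := fun e => h e.symm
    simp only [ne_eq, h, h', not_false_eq_true, dite_true]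
    congr 1
    exact Subtype.ext (Finset.pair_comm a b)

lemma co_add (v w : Xk k → ZMod 2) (a b : Fin k) : co (v + w) a b = co v a b + co w a b := by
  unfold co
  by_cases h : a = b <;> simp [h]

lemma co_smul (t : ZMod 2) (v : Xk k → ZMod 2) (a b : Fin k) : co (t • v) a b = t * co v a b := by
  unfold co
  by_cases h : a = b <;> simp [h]

lemma co_sum {ι : Type*} (S : Finset ι) (v : ι → Xk k → ZMod 2) (a b : Fin k) :
    co (∑ i ∈ S, v i) a b = ∑ i ∈ S, co (v i) a b := by
  unfold co
  by_cases h : a = b <;> simp [h]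

lemma co_zero (a b : Fin k) : co (0 : Xk k → ZMod 2) a b = 0 := by
  unfold co
  by_cases h : a = b <;> simp [h]

lemma co_ext {v w : Xk k → ZMod 2} (h : ∀ a b, a ≠ b → co v a b = co w a b) : v = w := by
  funext ⟨s, hs⟩
  obtain ⟨a, b, hab, rfl⟩ := Finset.card_eq_two.mp hs
  simpa [co, hab, pr] using h a b hab

lemma co_act (g : Equiv.Perm (Fin k)) (v : Xk k → ZMod 2) (a b : Fin k) :
    co (act g v) a b = co v (g⁻¹ a) (g⁻¹ b) := by
  unfold co act
  by_cases h : a = b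
  · simp [h]
  · have h' : g⁻¹ a ≠ g⁻¹ b := fun e => h (g⁻¹.injective e)
    simp only [ne_eq, h, h', not_false_eq_true, dite_true]
    congr 1
    apply Subtype.ext
    rw [smul_val]
    simp [Finset.smul_finset_insert, pr]

lemma co_ones {a b : Fin k} (h : a ≠ b) : co (allOnes k) a b = 1 := by
  simp [co, h, allOnes]

lemma co_x (i : Fin k) {a b : Fin k} (h : a ≠ b) :
    co (xVec k i) a b = (if i = a then 1 else 0) + (if i = b then 1 else 0) := by
  simp only [co, ne_eq, h, not_false_eq_true, dite_true, xVec, pr, Finset.mem_insert,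
    Finset.mem_singleton]
  by_cases h1 : i = a <;> by_cases h2 : i = b <;> simp_all

lemma co_ed (p q a b : Fin k) (h : p ≠ q) :
    co (ed p q) a b = if (a = p ∧ b = q) ∨ (a = q ∧ b = p) then 1 else 0 := by
  by_cases hab : a = b
  · subst hab
    rw [co_self, if_neg]
    rintro (⟨rfl, rfl⟩ | ⟨rfl, rfl⟩) <;> exact h rfl
  · simp only [co, ne_eq, hab, not_false_eq_true, dite_true, ed, pr]
    congr 1
    rw [← Finset.coe_inj]
    simp only [Finset.coe_pair, Set.pair_eq_pair_iff]

lemma ed_symm (a b : Fin k) : ed a b = ed b a := by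
  funext s; simp [ed, Finset.pair_comm]

lemma ed_self (a : Fin k) : ed a a = 0 := by
  funext s
  simp only [ed, Pi.zero_apply, ite_eq_right_iff]
  intro h
  have := s.2
  rw [h] at this
  simp at this

lemma dot_ed (v : Xk k → ZMod 2) {a b : Fin k} (h : a ≠ b) : (ed a b) ⬝ᵥ v = co v a b := by
  simp only [dotProduct, ed, co, ne_eq, h, not_false_eq_true, dite_true, ite_mul, one_mul, zero_mul]
  rw [Finset.sum_eq_single (pr a b h)]
  · simp [pr]
  · intro s _ hs
    rw [if_neg]
    intro e
    exact hs (Subtype.ext e)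
  · simp

lemma act_ed (g : Equiv.Perm (Fin k)) (a b : Fin k) : act g (ed a b) = ed (g a) (g b) := by
  funext s
  unfold act ed
  congr 1
  rw [smul_val]
  simp only [eq_iff_iff]
  rw [inv_smul_eq_iff]
  simp [Finset.smul_finset_insert]

lemma act_add (g : Equiv.Perm (Fin k)) (v w : Xk k → ZMod 2) :
    act g (v + w) = act g v + act g w := rfl

lemma act_smul (g : Equiv.Perm (Fin k)) (t : ZMod 2) (v : Xk k → ZMod 2) :
    act g (t • v) = t • act g v := rfl

lemma act_mul (g h : Equiv.Perm (Fin k)) (v : Xk k → ZMod 2) :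
    act (g * h) v = act g (act h v) := by
  funext s
  simp [act, mul_smul]

lemma act_cyc (g : Equiv.Perm (Fin k)) (a b c d : Fin k) :
    act g (cyc a b c d) = cyc (g a) (g b) (g c) (g d) := by
  simp [cyc, act_add, act_ed]

lemma act_x (g : Equiv.Perm (Fin k)) (i : Fin k) : act g (xVec k i) = xVec k (g i) := by
  funext s
  unfold act xVec
  congr 1
  rw [smul_val, Finset.mem_inv_smul_finset_iff]
  rfl

lemma act_ones (g : Equiv.Perm (Fin k)) : act g (allOnes k) = allOnes k := rfl

lemma dot_act (g : Equiv.Perm (Fin k)) (v w : Xk k → ZMod 2) :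
    (act g v) ⬝ᵥ (act g w) = v ⬝ᵥ w := by
  unfold dotProduct act
  exact Equiv.sum_comp (MulAction.toPerm (g⁻¹ : Equiv.Perm (Fin k))) (fun s => v s * w s)

lemma two_zero (x : ZMod 2) : x + x = 0 := CharTwo.add_self_eq_zero x

lemma kappa (v : Xk k → ZMod 2) {a b c d : Fin k} (hab : a ≠ b) (hac : a ≠ c) (had : a ≠ d)
    (hbc : b ≠ c) (hbd : b ≠ d) (hcd : c ≠ d) :
    v + act (Equiv.swap a b) v + act (Equiv.swap c d) v
      + act (Equiv.swap a b) (act (Equiv.swap c d) v)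
      = (co v a c + co v a d + co v b c + co v b d) • cyc a b c d := by
  apply co_ext
  intro x y hxy
  have h2 := two_zero
  simp only [co_add, co_act, co_smul, cyc, Equiv.swap_inv, co_ed _ _ _ _ hac, co_ed _ _ _ _ had,
    co_ed _ _ _ _ hbc, co_ed _ _ _ _ hbd]
  have hx : x = a ∨ x = b ∨ x = c ∨ x = d ∨ (x ≠ a ∧ x ≠ b ∧ x ≠ c ∧ x ≠ d) := by tauto
  have hy : y = a ∨ y = b ∨ y = c ∨ y = d ∨ (y ≠ a ∧ y ≠ b ∧ y ≠ c ∧ y ≠ d) := by tauto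
  have t1 : ∀ p q : ZMod 2, p + q + p + q = 0 := by decide
  have t2 : ∀ p q : ZMod 2, p + p + q + q = 0 := by decide
  have s := co_symm v
  have sa : Equiv.swap a b c = c := Equiv.swap_apply_of_ne_of_ne hac.symm hbc.symm
  have sb : Equiv.swap a b d = d := Equiv.swap_apply_of_ne_of_ne had.symm hbd.symm
  have sc : Equiv.swap c d a = a := Equiv.swap_apply_of_ne_of_ne hac had
  have sd : Equiv.swap c d b = b := Equiv.swap_apply_of_ne_of_ne hbc hbd
  rcases hx with rfl | rfl | rfl | rfl | ⟨x1, x2, x3, x4⟩ <;>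
  rcases hy with rfl | rfl | rfl | rfl | ⟨y1, y2, y3, y4⟩ <;>
  first
  | exact absurd rfl hxy
  | (simp [*, Equiv.swap_apply_of_ne_of_ne, Ne.symm, hab.symm, hac.symm, had.symm, hbc.symm, hbd.symm, hcd.symm, t1, t2]; done)
  | (simp [sa, sb, sc, sd, Equiv.swap_apply_of_ne_of_ne, *, hab.symm, hac.symm, had.symm, hbc.symm, hbd.symm, hcd.symm]; grind)

lemma formMap_eq (w v : Xk k → ZMod 2) : formMap (ZMod 2) w v = w ⬝ᵥ v := by
  simp [formMap, dotProduct]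

/-- The standard bilinear form. -/
def BF (k : ℕ) : LinearMap.BilinForm (ZMod 2) (Xk k → ZMod 2) :=
  dotProductBilin (ZMod 2) (ZMod 2)

lemma BF_apply (v w : Xk k → ZMod 2) : BF k v w = v ⬝ᵥ w := rfl

lemma BF_refl : (BF k).IsRefl := by
  intro v w h
  rw [BF_apply] at *
  rwa [dotProduct_comm]

lemma BF_nondeg : (BF k).Nondegenerate := by
  constructor
  · intro v h
    exact dotProduct_eq_zero v h
  · intro v h
    refine dotProduct_eq_zero v fun w => ?_
    rw [dotProduct_comm]
    exact h w

lemma perp_eq (U : Submodule (ZMod 2) (Xk k → ZMod 2)) :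
    perpSub (ZMod 2) U = (BF k).orthogonal U := by
  ext v
  simp only [perpSub, Submodule.mem_iInf, LinearMap.mem_ker, formMap_eq,
    LinearMap.BilinForm.mem_orthogonal_iff, BF_apply, Subtype.forall]
  
lemma mem_P3 (v : Xk k → ZMod 2) :
    v ∈ P3 k ↔ allOnes k ⬝ᵥ v = 0 ∧ ∀ i, xVec k i ⬝ᵥ v = 0 := by
  rw [P3, perp_eq]
  simp only [LinearMap.BilinForm.mem_orthogonal_iff, BF_apply]
  constructor
  · intro h
    refine ⟨h _ (Submodule.mem_sup_left (Submodule.mem_span_singleton_self _)), fun i => ?_⟩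
    exact h _ (Submodule.mem_sup_right (Submodule.subset_span ⟨i, rfl⟩))
  · rintro ⟨h1, h2⟩
    have : P1 k ⊔ P2 k ≤ LinearMap.ker ((BF k).flip v) := by
      refine sup_le ?_ ?_
      · refine Submodule.span_le.mpr ?_
        rintro _ rfl
        exact h1
      · refine Submodule.span_le.mpr ?_
        rintro _ ⟨i, rfl⟩
        exact h2 i
    intro n hn
    exact this hn

lemma mem_P1 (v : Xk k → ZMod 2) : v ∈ P1 k ↔ ∃ t : ZMod 2, t • allOnes k = v :=
  Submodule.mem_span_singleton

/-- The linear combination map onto `P₂`. -/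
def lc (k : ℕ) : (Fin k → ZMod 2) →ₗ[ZMod 2] (Xk k → ZMod 2) :=
  Fintype.linearCombination (ZMod 2) (xVec k)

lemma range_lc : LinearMap.range (lc k) = P2 k := by
  unfold lc P2
  exact Fintype.range_linearCombination (ZMod 2) _

lemma mem_P2 (v : Xk k → ZMod 2) : v ∈ P2 k ↔ ∃ h, lc k h = v := by
  rw [← range_lc]; rfl

lemma lc_apply (h : Fin k → ZMod 2) : lc k h = ∑ i, h i • xVec k i := rfl

lemma co_lc (h : Fin k → ZMod 2) {a b : Fin k} (hab : a ≠ b) : co (lc k h) a b = h a + h b := by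
  rw [lc_apply, co_sum]
  simp [co_smul, co_x _ hab, mul_add, Finset.sum_add_distrib]

lemma dot_x (i : Fin k) {j : Fin k} (hij : i ≠ j) : xVec k i ⬝ᵥ xVec k j = 1 := by
  have : xVec k i ⬝ᵥ xVec k j = ed i j ⬝ᵥ xVec k j := by
    unfold dotProduct
    refine Finset.sum_congr rfl fun s _ => ?_
    simp only [xVec, ed]
    by_cases h1 : i ∈ s.1 <;> by_cases h2 : j ∈ s.1
    · have : s.1 = {i, j} := by
        symm
        apply Finset.eq_of_subset_of_card_le
        · intro a; simp; rintro (rfl | rfl) <;> assumption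
        · rw [Finset.card_pair hij, s.2]
      simp [this]
    · simp [h2]
    · have : s.1 ≠ {i, j} := by intro e; apply h1; simp [e]
      simp [h1, this]
    · simp [h2]
  rw [this, dot_ed _ hij, co_x _ hij]
  simp [hij.symm]

lemma sum_x : ∑ i, xVec k i = 0 := by
  have : ∑ i, xVec k i = lc k (fun _ => 1) := by simp [lc_apply]
  rw [this]
  apply co_ext
  intro a b h
  rw [co_lc _ h, co_zero, two_zero]

lemma cast_odd (hmod : k % 4 = 3) : (k : ZMod 2) = 1 := by
  rw [ZMod.natCast_eq_one_iff_odd, Nat.odd_iff]; omega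

lemma dot_xx (hmod : k % 4 = 3) (i : Fin k) : xVec k i ⬝ᵥ xVec k i = 0 := by
  have h : (∑ j, xVec k j) ⬝ᵥ xVec k i = 0 := by rw [sum_x]; simp
  rw [sum_dotProduct, ← Finset.add_sum_erase _ _ (Finset.mem_univ i),
    Finset.sum_congr rfl (fun j hj => dot_x j (Finset.ne_of_mem_erase hj))] at h
  have hk : 1 ≤ k := by omega
  simpa [Nat.cast_sub hk, cast_odd hmod] using h

lemma dot_x_ones (hmod : k % 4 = 3) (i : Fin k) : xVec k i ⬝ᵥ allOnes k = 0 := by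
  rw [← dot_xx hmod i]
  unfold dotProduct
  refine Finset.sum_congr rfl fun s _ => ?_
  simp only [xVec, allOnes]
  split_ifs <;> simp

lemma dot_ones (hmod : k % 4 = 3) : allOnes k ⬝ᵥ allOnes k = 1 := by
  simp only [dotProduct, allOnes, mul_one, Finset.sum_const, nsmul_eq_mul]
  have : (Finset.univ : Finset (Xk k)).card = k.choose 2 := by
    have := Fintype.card_finset_len (α := Fin k) 2
    rw [Fintype.card_fin] at this
    rw [← this]
    rfl
  rw [this, ZMod.natCast_eq_one_iff_odd, Nat.choose_two_right, Nat.odd_iff]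
  obtain ⟨m, rfl⟩ : ∃ m, k = 4 * m + 3 := ⟨k / 4, by omega⟩
  have : (4 * m + 3) * (4 * m + 3 - 1) = 2 * (2 * (4 * m * m + 5 * m + 1) + 1) := by
    rw [show 4 * m + 3 - 1 = 4 * m + 2 by omega]; ring
  rw [this]; omega

lemma dot_lc (h : Fin k → ZMod 2) (w : Xk k → ZMod 2) : lc k h ⬝ᵥ w = ∑ i, h i * (xVec k i ⬝ᵥ w) := by
  rw [lc_apply, sum_dotProduct]
  simp

lemma mem_P12 (v : Xk k → ZMod 2) :
    v ∈ P1 k ⊔ P2 k ↔ ∃ (t : ZMod 2) (h : Fin k → ZMod 2), t • allOnes k + lc k h = v := by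
  rw [Submodule.mem_sup]
  constructor
  · rintro ⟨y, hy, z, hz, rfl⟩
    obtain ⟨t, rfl⟩ := (mem_P1 _).1 hy
    obtain ⟨h, rfl⟩ := (mem_P2 _).1 hz
    exact ⟨t, h, rfl⟩
  · rintro ⟨t, h, rfl⟩
    exact ⟨_, (mem_P1 _).2 ⟨t, rfl⟩, _, (mem_P2 _).2 ⟨h, rfl⟩, rfl⟩

lemma disj12 (hk : 7 ≤ k) : Disjoint (P1 k) (P2 k) := by
  rw [Submodule.disjoint_def]
  intro v h1 h2
  obtain ⟨t, rfl⟩ := (mem_P1 _).1 h1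
  obtain ⟨h, hh⟩ := (mem_P2 _).1 h2
  have key : ∀ a b : Fin k, a ≠ b → t = h a + h b := by
    intro a b hab
    have := congrArg (fun v => co v a b) hh
    simp only [co_lc _ hab, co_smul, co_ones hab, mul_one] at this
    exact this.symm
  have e1 := key ⟨0, by omega⟩ ⟨1, by omega⟩ (by simp)
  have e2 := key ⟨0, by omega⟩ ⟨2, by omega⟩ (by simp)
  have e3 := key ⟨1, by omega⟩ ⟨2, by omega⟩ (by simp)
  have aux : ∀ t p q r : ZMod 2, t = p + q → t = p + r → t = q + r → t = 0 := by decide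
  have : t = 0 := aux _ _ _ _ e1 e2 e3
  simp [this]

lemma disj123 (hmod : k % 4 = 3) : Disjoint (P1 k ⊔ P2 k) (P3 k) := by
  rw [Submodule.disjoint_def]
  intro v h1 h2
  obtain ⟨t, h, rfl⟩ := (mem_P12 _).1 h1
  obtain ⟨h3, h4⟩ := (mem_P3 _).1 h2
  have ht : t = 0 := by
    rw [dotProduct_comm, add_dotProduct, dot_lc] at h3
    simpa [dot_x_ones hmod, dot_ones hmod] using h3
  subst ht
  rw [zero_smul, zero_add] at *
  have key : ∀ j, ∑ i, h i = h j := by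
    intro j
    have := h4 j
    rw [dotProduct_comm, dot_lc, ← Finset.add_sum_erase _ _ (Finset.mem_univ j),
      dot_xx hmod, mul_zero, zero_add,
      Finset.sum_congr rfl (fun i hi => by rw [dot_x i (Finset.ne_of_mem_erase hi), mul_one])] at this
    rw [← Finset.add_sum_erase _ _ (Finset.mem_univ j), this, add_zero]
  apply co_ext
  intro a b hab
  rw [co_lc _ hab, ← key a, ← key b, two_zero, co_zero]

lemma sup_top (hmod : k % 4 = 3) : P1 k ⊔ P2 k ⊔ P3 k = ⊤ := by
  have h := disj123 hmod
  unfold P3 at *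
  rw [perp_eq] at *
  exact ((LinearMap.BilinForm.isCompl_orthogonal_iff_disjoint BF_refl).2 h).sup_eq_top

lemma u_mem (hk : 2 ≤ k) (hmod : k % 4 = 3) : uVec k hk ∈ P3 k := by
  set p : Fin k := ⟨0, by omega⟩ with hp
  set q : Fin k := ⟨1, by omega⟩ with hq
  have hpq : p ≠ q := by simp [hp, hq]
  have hu : uVec k hk = allOnes k + xVec k p + xVec k q + ed p q := by
    apply co_ext
    intro a b hab
    simp only [co_add, co_ones hab, co_x _ hab, co_ed _ _ _ _ hpq]
    simp only [co, uVec, ne_eq, hab, not_false_eq_true, dite_true, pr, ← hp, ← hq,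
      Finset.mem_insert, Finset.mem_singleton]
    have c2 : (1 : ZMod 2) + 1 = 0 := by decide
    by_cases h1 : p = a <;> by_cases h2 : p = b <;> by_cases h3 : q = a <;> by_cases h4 : q = b <;>
      simp_all <;> grind
  rw [mem_P3, hu]
  have c2 : (1 : ZMod 2) + 1 = 0 := by decide
  constructor
  · rw [dotProduct_comm]
    simp [add_dotProduct, dot_ones hmod, dot_x_ones hmod, dot_ed _ hpq, co_ones hpq, c2]
  · intro i
    rw [dotProduct_comm]
    have e : allOnes k ⬝ᵥ xVec k i = 0 := by rw [dotProduct_comm, dot_x_ones hmod]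
    simp only [add_dotProduct, e, dot_ed _ hpq, co_x _ hpq]
    by_cases h1 : p = i
    · subst h1
      simp [dot_xx hmod, dot_x _ hpq.symm, hpq, c2]
    · by_cases h2 : q = i
      · subst h2
        simp [dot_xx hmod, dot_x _ hpq, hpq.symm, c2]
      · simp [dot_x _ h1, dot_x _ h2, Ne.symm h1, Ne.symm h2, c2]

lemma finrank_P2 (hk : 7 ≤ k) : Module.finrank (ZMod 2) (P2 k) = k - 1 := by
  have h := LinearMap.finrank_range_add_finrank_ker (lc k)
  rw [range_lc] at h
  have hker : LinearMap.ker (lc k) = Submodule.span (ZMod 2) {fun _ => 1} := by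
    ext h
    rw [LinearMap.mem_ker, Submodule.mem_span_singleton]
    constructor
    · intro h0
      refine ⟨h ⟨0, by omega⟩, ?_⟩
      funext j
      simp only [Pi.smul_apply, smul_eq_mul, mul_one]
      by_cases hj : (⟨0, by omega⟩ : Fin k) = j
      · rw [hj]
      · have := co_lc h hj
        rw [h0, co_zero] at this
        exact CharTwo.add_eq_zero.1 this.symm
    · rintro ⟨t, rfl⟩
      apply co_ext
      intro a b hab
      rw [co_lc _ hab, co_zero]
      exact two_zero _
  have hne : (fun _ => 1 : Fin k → ZMod 2) ≠ 0 := by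
    intro e
    have := congrFun e ⟨0, by omega⟩
    simp at this
  rw [hker, finrank_span_singleton hne] at h
  simp at h
  omega

/-- Closure of an invariant submodule under even permutations. -/
lemma inv_mem {W : Submodule (ZMod 2) (Xk k → ZMod 2)}
    (hW : InvSub (permRep (ZMod 2) (alternatingGroup (Fin k)) (Xk k)) W)
    {g : Equiv.Perm (Fin k)} (hg : Equiv.Perm.sign g = 1) {v : Xk k → ZMod 2} (hv : v ∈ W) :
    act g v ∈ W :=
  hW ⟨g, Equiv.Perm.mem_alternatingGroup.2 hg⟩ v hv

lemma sign_swap_swap {a b c d : Fin k} (hab : a ≠ b) (hcd : c ≠ d) :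
    Equiv.Perm.sign (Equiv.swap a b * Equiv.swap c d) = 1 := by
  rw [Equiv.Perm.sign_mul, Equiv.Perm.sign_swap hab, Equiv.Perm.sign_swap hcd]; simp

lemma trans4 (hk : 7 ≤ k) {n : ℕ} (hn : n ≤ 4) (x y : Fin n ↪ Fin k) :
    ∃ g : Equiv.Perm (Fin k), Equiv.Perm.sign g = 1 ∧ ∀ i, g (x i) = y i := by
  have h1 : MulAction.IsMultiplyPretransitive (alternatingGroup (Fin k)) (Fin k)
    (Nat.card (Fin k) - 2) := alternatingGroup.isMultiplyPretransitive (Fin k)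
  have h2 : MulAction.IsMultiplyPretransitive (alternatingGroup (Fin k)) (Fin k) n := by
    apply MulAction.isMultiplyPretransitive_of_le (n := Nat.card (Fin k) - 2)
    · simp; omega
    · simp
  obtain ⟨g, hg⟩ := h2.exists_smul_eq x y
  refine ⟨g, Equiv.Perm.mem_alternatingGroup.1 g.2, fun i => ?_⟩
  rw [← hg]; rfl

lemma irr1 (hk : 7 ≤ k) :
    IsIrreducibleSub (permRep (ZMod 2) (alternatingGroup (Fin k)) (Xk k)) (P1 k) := by
  refine ⟨?_, ?_, ?_⟩
  · intro g v hv
    obtain ⟨t, rfl⟩ := (mem_P1 _).1 hv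
    rw [permRep_eq, act_smul, act_ones]
    exact hv
  · intro e
    have h : allOnes k ∈ P1 k := (mem_P1 _).2 ⟨1, one_smul _ _⟩
    rw [e, Submodule.mem_bot] at h
    have hne : (⟨0, by omega⟩ : Fin k) ≠ ⟨1, by omega⟩ := by simp
    have := co_ones hne
    rw [h, co_zero] at this
    exact zero_ne_one this
  · intro W hW _
    by_cases h : allOnes k ∈ W
    · right
      refine le_antisymm hW (Submodule.span_le.2 ?_)
      rintro _ rfl
      exact h
    · left
      rw [Submodule.eq_bot_iff]
      intro v hv
      obtain ⟨t, rfl⟩ := (mem_P1 _).1 (hW hv)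
      have : t = 0 ∨ t = 1 := (by decide : ∀ t : ZMod 2, t = 0 ∨ t = 1) t
      rcases this with rfl | rfl
      · simp
      · rw [one_smul] at hv; exact absurd hv h

lemma exists_fresh (hk : 7 ≤ k) (S : Finset (Fin k)) (hS : S.card ≤ 6) : ∃ x, x ∉ S := by
  by_contra! h
  have : S = Finset.univ := Finset.eq_univ_iff_forall.2 h
  rw [this] at hS
  simp at hS
  omega

lemma card_list (l : List (Fin k)) (n : ℕ) (h : l.length ≤ n) : l.toFinset.card ≤ n :=
  (List.toFinset_card_le l).trans h

lemma fresh (hk : 7 ≤ k) (l : List (Fin k)) (hl : l.length ≤ 6) : ∃ x, ∀ y ∈ l, x ≠ y := by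
  obtain ⟨x, hx⟩ := exists_fresh hk l.toFinset (card_list l 6 hl)
  refine ⟨x, ?_⟩
  rintro y hy rfl
  exact hx (by simpa using hy)

lemma act_lc (g : Equiv.Perm (Fin k)) (h : Fin k → ZMod 2) :
    act g (lc k h) = lc k (fun i => h (g⁻¹ i)) := by
  apply co_ext
  intro a b hab
  rw [co_act, co_lc _ hab, co_lc]
  exact fun e => hab (g⁻¹.injective e)

lemma irr2 (hk : 7 ≤ k) (hmod : k % 4 = 3) :
    IsIrreducibleSub (permRep (ZMod 2) (alternatingGroup (Fin k)) (Xk k)) (P2 k) := by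
  refine ⟨?_, ?_, ?_⟩
  · intro g v hv
    obtain ⟨t, rfl⟩ := (mem_P2 _).1 hv
    rw [permRep_eq, act_lc]
    exact (mem_P2 _).2 ⟨_, rfl⟩
  · intro e
    have h := finrank_P2 hk
    rw [e] at h
    simp at h
    omega
  · intro W hW hinv
    by_cases hbot : W = ⊥
    · exact Or.inl hbot
    right
    obtain ⟨v, hv, hv0⟩ := Submodule.exists_mem_ne_zero_of_ne_bot hbot
    obtain ⟨h, rfl⟩ := (mem_P2 _).1 (hW hv)
    obtain ⟨p, q, hpq, hh⟩ : ∃ p q, p ≠ q ∧ h p + h q ≠ 0 := by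
      by_contra! hc
      apply hv0
      apply co_ext
      intro a b hab
      rw [co_lc _ hab, co_zero, hc a b hab]
    have h1 : h p + h q = 1 := by
      generalize h p + h q = z at *
      revert z; decide
    obtain ⟨r, s, hrs, hrp, hrq, hsp, hsq, he⟩ : ∃ r s, r ≠ s ∧ r ≠ p ∧ r ≠ q ∧ s ≠ p ∧ s ≠ q ∧
        h r = h s := by
      obtain ⟨r, hr⟩ := fresh hk [p, q] (by simp)
      obtain ⟨s, hs⟩ := fresh hk [p, q, r] (by simp)
      obtain ⟨t, ht⟩ := fresh hk [p, q, r, s] (by simp)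
      simp at hr hs ht
      have : ∀ x y z : ZMod 2, x = y ∨ x = z ∨ y = z := by decide
      rcases this (h r) (h s) (h t) with e | e | e
      · exact ⟨r, s, by tauto, by tauto, by tauto, by tauto, by tauto, e⟩
      · exact ⟨r, t, by tauto, by tauto, by tauto, by tauto, by tauto, e⟩
      · exact ⟨s, t, by tauto, by tauto, by tauto, by tauto, by tauto, e⟩
    have hmem : xVec k p + xVec k q ∈ W := by
      have h2 := W.add_mem hv (inv_mem hinv (sign_swap_swap hpq hrs) hv)
      convert h2 using 1
      rw [act_lc, ← map_add]
      have hfun : (h + fun i => h ((Equiv.swap p q * Equiv.swap r s)⁻¹ i))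
          = Pi.single p 1 + Pi.single q 1 := by
        funext i
        simp only [mul_inv_rev, Equiv.swap_inv, Equiv.Perm.mul_apply, Pi.add_apply]
        by_cases ip : i = p
        · subst ip
          rw [Equiv.swap_apply_left, Equiv.swap_apply_of_ne_of_ne hrq.symm hsq.symm]
          simp [h1, hpq]
        by_cases iq : i = q
        · subst iq
          rw [Equiv.swap_apply_right, Equiv.swap_apply_of_ne_of_ne hrp.symm hsp.symm]
          simp [add_comm, h1, hpq]
        rw [Equiv.swap_apply_of_ne_of_ne ip iq]
        simp only [Pi.single_apply, ip, iq, if_false, add_zero]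
        by_cases ir : i = r
        · subst ir
          rw [Equiv.swap_apply_left, he, two_zero]
        by_cases is : i = s
        · subst is
          rw [Equiv.swap_apply_right, he, two_zero]
        rw [Equiv.swap_apply_of_ne_of_ne ir is, two_zero]
      rw [hfun]
      simp [lc]
    have hall : ∀ i j, i ≠ j → xVec k i + xVec k j ∈ W := by
      intro i j hij
      obtain ⟨g, hg, hgi⟩ := trans4 hk (n := 2) (by norm_num)
        ⟨![p, q], by intro x y; fin_cases x <;> fin_cases y <;> simp [hpq, hpq.symm]⟩
        ⟨![i, j], by intro x y; fin_cases x <;> fin_cases y <;> simp [hij, hij.symm]⟩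
      have g0 : g p = i := hgi 0
      have g1 : g q = j := hgi 1
      have := inv_mem hinv hg hmem
      rwa [act_add, act_x, act_x, g0, g1] at this
    have hx : ∀ i, xVec k i ∈ W := by
      intro i
      have : ∑ j, (xVec k i + xVec k j) ∈ W := by
        refine W.sum_mem fun j _ => ?_
        by_cases hij : i = j
        · subst hij
          have : xVec k i + xVec k i = 0 := by funext s; exact two_zero _
          rw [this]
          exact W.zero_mem
        · exact hall i j hij
      rw [Finset.sum_add_distrib, sum_x, add_zero, Finset.sum_const, Finset.card_univ,
        Fintype.card_fin, ← Nat.cast_smul_eq_nsmul (ZMod 2), cast_odd hmod, one_smul] at this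
      exact this
    refine le_antisymm hW (Submodule.span_le.2 ?_)
    rintro _ ⟨i, rfl⟩
    exact hx i

/-- Vectors orthogonal to all 4-cycles lie in `P₁ + P₂`. -/
lemma perp_cyc (hk : 7 ≤ k) (v : Xk k → ZMod 2)
    (h : ∀ a b c d : Fin k, a ≠ b → a ≠ c → a ≠ d → b ≠ c → b ≠ d → c ≠ d →
      co v a c + co v a d + co v b c + co v b d = 0) : v ∈ P1 k ⊔ P2 k := by
  set o : Fin k := ⟨0, by omega⟩ with ho
  set p : Fin k := ⟨1, by omega⟩ with hp
  set q : Fin k := ⟨2, by omega⟩ with hq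
  have hop : o ≠ p := by simp [ho, hp]
  have hoq : o ≠ q := by simp [ho, hq]
  have hpq : p ≠ q := by simp [hp, hq]
  let T : Fin k → Fin k → ZMod 2 := fun x y => co v x y + co v o x + co v o y
  have Ts : ∀ x y, T x y = T y x := by
    intro x y
    simp only [T]
    rw [co_symm v x y]; ring
  have T1 : ∀ x y z, x ≠ o → y ≠ o → z ≠ o → x ≠ y → x ≠ z → T x y = T x z := by
    intro x y z hx hy hz hxy hxz
    by_cases hyz : y = z
    · rw [hyz]
    have := h x o y z hx hxy hxz hy.symm hz.symm hyz
    simp only [T]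
    have aux : ∀ a b c d e : ZMod 2, a + b + c + d = 0 → a + e + c = b + e + d := by decide
    exact aux _ _ _ _ _ this
  have T2 : ∀ x y, x ≠ o → y ≠ o → x ≠ y → T x y = T p q := by
    intro x y hx hy hxy
    by_cases hxp : x = p
    · subst hxp
      exact T1 _ _ _ hop.symm hy hoq.symm hxy hpq
    by_cases hyp : y = p
    · subst hyp
      rw [Ts]
      exact T1 _ _ _ hop.symm hx hoq.symm hxy.symm hpq
    · rw [T1 x y p hx hy hop.symm hxy hxp, Ts, T1 p x q hop.symm hx hoq.symm (Ne.symm hxp) hpq]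
  rw [mem_P12]
  refine ⟨T p q, fun x => if x = o then T p q else co v o x, ?_⟩
  apply co_ext
  intro a b hab
  rw [co_add, co_smul, co_ones hab, co_lc _ hab]
  have aux : ∀ t x : ZMod 2, t * 1 + (t + x) = x := by decide
  have aux2 : ∀ t x : ZMod 2, t * 1 + (x + t) = x := by decide
  have aux3 : ∀ x y z : ZMod 2, (x + y + z) * 1 + (y + z) = x := by decide
  by_cases ha : a = o
  · have hb : b ≠ o := fun e => hab (ha.trans e.symm)
    simp only [ha, hb, if_true, if_false]
    exact aux _ _
  by_cases hb : b = o
  · simp only [ha, hb, if_true, if_false]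
    rw [co_symm v a o]
    exact aux2 _ _
  simp only [ha, hb, if_false]
  rw [← T2 a b ha hb hab]
  exact aux3 _ _ _

lemma dot_cyc (v : Xk k → ZMod 2) {a b c d : Fin k} (hac : a ≠ c) (had : a ≠ d)
    (hbc : b ≠ c) (hbd : b ≠ d) :
    cyc a b c d ⬝ᵥ v = co v a c + co v a d + co v b c + co v b d := by
  simp [cyc, add_dotProduct, dot_ed _ hac, dot_ed _ had, dot_ed _ hbc, dot_ed _ hbd]

/-- A submodule containing all the 4-cycles contains `P₃`. -/
lemma P3_le (hk : 7 ≤ k) (W : Submodule (ZMod 2) (Xk k → ZMod 2))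
    (h : ∀ a b c d : Fin k, a ≠ b → a ≠ c → a ≠ d → b ≠ c → b ≠ d → c ≠ d →
      cyc a b c d ∈ W) : P3 k ≤ W := by
  rw [P3, perp_eq, ← LinearMap.BilinForm.orthogonal_orthogonal BF_nondeg BF_refl W]
  apply LinearMap.BilinForm.orthogonal_le
  intro v hv
  apply perp_cyc hk
  intro a b c d hab hac had hbc hbd hcd
  rw [← dot_cyc v hac had hbc hbd]
  exact hv _ (h a b c d hab hac had hbc hbd hcd)

lemma add_self_vec (v : Xk k → ZMod 2) : v + v = 0 := by
  funext s; exact two_zero _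

lemma swap_act_comm {a b c d : Fin k} (hac : a ≠ c) (had : a ≠ d) (hbc : b ≠ c) (hbd : b ≠ d)
    (v : Xk k → ZMod 2) : act (Equiv.swap a b) (act (Equiv.swap c d) v)
      = act (Equiv.swap c d) (act (Equiv.swap a b) v) := by
  rw [← act_mul, ← act_mul]
  congr 1
  ext x
  simp only [Equiv.Perm.mul_apply, Equiv.swap_apply_def]
  grind

lemma act_swap_swap (a b : Fin k) (v : Xk k → ZMod 2) :
    act (Equiv.swap a b) (act (Equiv.swap a b) v) = v := by
  rw [← act_mul, Equiv.swap_mul_self]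
  funext s
  simp [act]

lemma co_act_swap (a b x y : Fin k) (v : Xk k → ZMod 2) :
    co (act (Equiv.swap a b) v) x y = co v (Equiv.swap a b x) (Equiv.swap a b y) := by
  rw [co_act, Equiv.swap_inv]

lemma exists_cyc (hk : 7 ≤ k) {W : Submodule (ZMod 2) (Xk k → ZMod 2)}
    (hinv : InvSub (permRep (ZMod 2) (alternatingGroup (Fin k)) (Xk k)) W)
    {v : Xk k → ZMod 2} (hv : v ∈ W) {a b c d : Fin k}
    (hab : a ≠ b) (hac : a ≠ c) (had : a ≠ d) (hbc : b ≠ c) (hbd : b ≠ d) (hcd : c ≠ d)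
    (hne : co v a c + co v a d + co v b c + co v b d ≠ 0) :
    ∃ p q r s : Fin k, p ≠ q ∧ p ≠ r ∧ p ≠ s ∧ q ≠ r ∧ q ≠ s ∧ r ≠ s ∧ cyc p q r s ∈ W := by
  have h1 : co v a c + co v a d + co v b c + co v b d = 1 := by
    generalize co v a c + co v a d + co v b c + co v b d = z at *
    revert z; decide
  obtain ⟨e, he⟩ := fresh hk [a, b, c, d] (by simp)
  obtain ⟨f, hf⟩ := fresh hk [a, b, c, d, e] (by simp)
  obtain ⟨g, hg⟩ := fresh hk [a, b, c, d, e, f] (by simp)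
  simp only [List.mem_cons, List.not_mem_nil, or_false, forall_eq_or_imp, forall_eq] at he hf hg
  obtain ⟨ea, eb, ec, edd⟩ := he
  obtain ⟨fa, fb, fc, fd, fe⟩ := hf
  obtain ⟨ga, gb, gc, gd, ge, gf⟩ := hg
  -- first projection
  set w := v + act (Equiv.swap a b * Equiv.swap e f) v + act (Equiv.swap c d * Equiv.swap e f) v
    + act (Equiv.swap a b * Equiv.swap c d) v with hw
  have hwW : w ∈ W :=
    W.add_mem (W.add_mem (W.add_mem hv (inv_mem hinv (sign_swap_swap hab fe.symm) hv))
      (inv_mem hinv (sign_swap_swap hcd fe.symm) hv)) (inv_mem hinv (sign_swap_swap hab hcd) hv)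
  have hK := kappa v hab hac had hbc hbd hcd
  rw [h1, one_smul] at hK
  have hfix : act (Equiv.swap e f) w = w := by
    have hC : act (Equiv.swap e f) (cyc a b c d) = cyc a b c d := by
      rw [act_cyc, Equiv.swap_apply_of_ne_of_ne ea.symm fa.symm,
        Equiv.swap_apply_of_ne_of_ne eb.symm fb.symm, Equiv.swap_apply_of_ne_of_ne ec.symm fc.symm,
        Equiv.swap_apply_of_ne_of_ne edd.symm fd.symm]
    have c1 := swap_act_comm ea eb fa fb
    have c2 := swap_act_comm ec edd fc fd
    have hK2 := congrArg (act (Equiv.swap e f)) hK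
    rw [hC, ← hK] at hK2
    simp only [act_add] at hK2
    rw [hw]
    simp only [act_add, act_mul, c1, c2, act_swap_swap] at hK2 ⊢
    funext s
    have hs := congrFun hK2 s
    simp only [Pi.add_apply] at hs ⊢
    grind
  have sw : ∀ {x y z : Fin k}, z ≠ x → z ≠ y → Equiv.swap x y z = z :=
    fun h h' => Equiv.swap_apply_of_ne_of_ne h h'
  have z1 : ∀ p q : ZMod 2, p + q + p + q = 0 := by decide
  have z2 : ∀ p q : ZMod 2, p + p + q + q = 0 := by decide
  have wab : co w a b = 0 := by
    simp only [hw, co_add, act_mul, co_act_swap, sw ea.symm fa.symm, sw eb.symm fb.symm,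
      sw hac had, sw hbc hbd, Equiv.swap_apply_left, Equiv.swap_apply_right]
    rw [co_symm v b a]
    exact z1 _ _
  have wag : co w a g = 0 := by
    simp only [hw, co_add, act_mul, co_act_swap, sw ea.symm fa.symm, sw eb.symm fb.symm,
      sw hac had, sw hbc hbd, sw ga gb, sw gc gd, sw ge gf, Equiv.swap_apply_left]
    exact z1 _ _
  have wcg : co w c g = 0 := by
    simp only [hw, co_add, act_mul, co_act_swap, sw ec.symm fc.symm, sw edd.symm fd.symm,
      sw hac.symm hbc.symm, sw ga gb, sw gc gd, sw ge gf, Equiv.swap_apply_left]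
    exact z2 _ _
  have wcb : co w c b = 1 := by
    simp only [hw, co_add, act_mul, co_act_swap, sw ea.symm fa.symm, sw eb.symm fb.symm,
      sw ec.symm fc.symm, sw edd.symm fd.symm, sw hac.symm hbc.symm, sw had.symm hbd.symm,
      sw hac had, sw hbc hbd, Equiv.swap_apply_left, Equiv.swap_apply_right]
    rw [co_symm v c b, co_symm v c a, co_symm v d b, co_symm v d a, ← h1]
    ring
  -- second projection
  have hK3 := kappa w hac hab ga.symm hbc.symm gc.symm gb.symm
  rw [wab, wag, wcb, wcg, zero_add, zero_add, add_zero, one_smul] at hK3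
  refine ⟨a, c, b, g, hac, hab, ga.symm, hbc.symm, gc.symm, gb.symm, ?_⟩
  rw [← hK3]
  refine W.add_mem (W.add_mem (W.add_mem hwW ?_) ?_) ?_
  · have := inv_mem hinv (sign_swap_swap hac fe.symm) hwW
    rwa [act_mul, hfix] at this
  · have := inv_mem hinv (sign_swap_swap gb.symm fe.symm) hwW
    rwa [act_mul, hfix] at this
  · have := inv_mem hinv (sign_swap_swap hac gb.symm) hwW
    rwa [act_mul] at this

lemma irr3 (hk : 7 ≤ k) (hmod : k % 4 = 3) :
    IsIrreducibleSub (permRep (ZMod 2) (alternatingGroup (Fin k)) (Xk k)) (P3 k) := by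
  refine ⟨?_, ?_, ?_⟩
  · intro g v hv
    rw [permRep_eq]
    obtain ⟨h1, h2⟩ := (mem_P3 _).1 hv
    refine (mem_P3 _).2 ⟨?_, fun i => ?_⟩
    · rw [← act_ones (g : Equiv.Perm (Fin k)), dot_act, h1]
    · have : xVec k i = act (g : Equiv.Perm (Fin k)) (xVec k ((g : Equiv.Perm (Fin k))⁻¹ i)) := by
        rw [act_x]; simp
      rw [this, dot_act, h2]
  · intro e
    have h := u_mem (by omega) hmod
    rw [e, Submodule.mem_bot] at h
    have hne : (⟨2, by omega⟩ : Fin k) ≠ ⟨3, by omega⟩ := by simp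
    have h2 : co (uVec k (by omega)) ⟨2, by omega⟩ ⟨3, by omega⟩ = 1 := by
      simp only [co, hne, ne_eq, not_false_eq_true, dite_true, uVec, pr]
      simp
    rw [h, co_zero] at h2
    exact zero_ne_one h2
  · intro W hW hinv
    by_cases hbot : W = ⊥
    · exact Or.inl hbot
    right
    obtain ⟨v, hv, hv0⟩ := Submodule.exists_mem_ne_zero_of_ne_bot hbot
    obtain ⟨p, q, r, s, hpq, hpr, hps, hqr, hqs, hrs, hC⟩ :
        ∃ p q r s : Fin k, p ≠ q ∧ p ≠ r ∧ p ≠ s ∧ q ≠ r ∧ q ≠ s ∧ r ≠ s ∧ cyc p q r s ∈ W := by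
      by_contra hc
      apply hv0
      refine Submodule.disjoint_def.1 (disj123 hmod) v (perp_cyc hk v ?_) (hW hv)
      intro a b c d hab hac had hbc hbd hcd
      by_contra hne
      exact hc (exists_cyc hk hinv hv hab hac had hbc hbd hcd hne)
    refine le_antisymm hW (P3_le hk W ?_)
    intro a b c d hab hac had hbc hbd hcd
    obtain ⟨g, hg, hgi⟩ := trans4 hk (n := 4) le_rfl
      ⟨![p, q, r, s], by
        intro x y; fin_cases x <;> fin_cases y <;>
          simp [hpq, hpr, hps, hqr, hqs, hrs, hpq.symm, hpr.symm, hps.symm, hqr.symm, hqs.symm,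
            hrs.symm]⟩
      ⟨![a, b, c, d], by
        intro x y; fin_cases x <;> fin_cases y <;>
          simp [hab, hac, had, hbc, hbd, hcd, hab.symm, hac.symm, had.symm, hbc.symm, hbd.symm,
            hcd.symm]⟩
    have g0 : g p = a := hgi 0
    have g1 : g q = b := hgi 1
    have g2 : g r = c := hgi 2
    have g3 : g s = d := hgi 3
    have := inv_mem hinv hg hC
    rwa [act_cyc, g0, g1, g2, g3] at this

end PermAux

/-- **(Guralnick–Liebeck, Section 4.)** Let `k ≡ 3 (mod 4)`, `k ≥ 7`, and let `P` be the
`𝔽₂ A_k`-permutation module on 2-subsets of `{1,…,k}`. With `f = Σ e_{ij}`,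
`P₁ = 𝔽₂ f`, `P₂ = span{x_i}` (`x_i = Σ_j e_{ij}`), and `P₃ = (P₁+P₂)^⊥` with respect to
the standard `G`-invariant form, we have `P = P₁ ⊕ P₂ ⊕ P₃` with each summand an
irreducible `𝔽₂ A_k`-module (`P₁ ≅ 𝔽₂`, `P₂ ≅ S^(k-1,1)`, `P₃ ≅ S^(k-2,2)`),
`dim P₂ = k - 1`, and `u = Σ_{2<i<j} e_{ij}` lies in `P₃`. -/
theorem perm_module_decomposition (k : ℕ) (hk : 7 ≤ k) (hmod : k % 4 = 3) :
    Disjoint (P1 k) (P2 k) ∧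
    Disjoint (P1 k ⊔ P2 k) (P3 k) ∧
    P1 k ⊔ P2 k ⊔ P3 k = ⊤ ∧
    IsIrreducibleSub (permRep (ZMod 2) (alternatingGroup (Fin k)) (Xk k)) (P1 k) ∧
    IsIrreducibleSub (permRep (ZMod 2) (alternatingGroup (Fin k)) (Xk k)) (P2 k) ∧
    IsIrreducibleSub (permRep (ZMod 2) (alternatingGroup (Fin k)) (Xk k)) (P3 k) ∧
    Module.finrank (ZMod 2) (P2 k) = k - 1 ∧
    uVec k (by omega) ∈ P3 k := by
  exact ⟨PermAux.disj12 hk, PermAux.disj123 hmod, PermAux.sup_top hmod, PermAux.irr1 hk,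
    PermAux.irr2 hk hmod, PermAux.irr3 hk hmod, PermAux.finrank_P2 hk, PermAux.u_mem _ hmod⟩
end
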